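/- Compatibility of the volume constraint (recovery sequence under an exact discrete volume constraint): Let L > 0, σ ∈ (0,1), and let (k_n) be integers with 0 ≤ k_n ≤ ⌊Ln²⌋ and k_n/(Ln²) → σ. Let v : ℝ → ℝ satisfy 0 ≤ v(x) ≤ 1 for all x ∈ (0,L), have finite pointwise total variation on (0,L), and ∫_{(0,L)} v dλ = σL. Then there exist u_n ∈ A_n(L,k_n) (for all n large enough) whose associated step functions converge weakly-* in L^∞(0,L) to v and such that limsup_{n→∞} F_n^L(u_n) ≤ 2·λ({x ∈ (0,L) : 0 < v(x) < 1}) + Var(v;(0,L)). -/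

import Mathlib

open MeasureTheory Filter Set
open scoped ENNReal Classical

noncomputable section

/-- `AdmDisc L n k u` : `u` belongs to `A_n(L,k)`, i.e. `u` takes the values `0,1` on
`{1,…,⌊Ln²⌋}`, exactly `k` of those indices carry the value `1`, and `u` vanishes
outside `{1,…,⌊Ln²⌋}` (extension by `0`). -/
def AdmDisc (L : ℝ) (n k : ℕ) (u : ℕ → ℝ) : Prop :=
  (∀ i ∈ Finset.Icc 1 (Nat.floor (L * (n : ℝ) ^ 2)), u i = 0 ∨ u i = 1) ∧
  (∀ i, i ∉ Finset.Icc 1 (Nat.floor (L * (n : ℝ) ^ 2)) → u i = 0) ∧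
  ((Finset.Icc 1 (Nat.floor (L * (n : ℝ) ^ 2))).filter fun i => u i = 1).card = k

/-- The discrete energy `F_n^L(u) = (1/n)·Σ (u_i − u_j)²`, the sum running over the
(unordered) pairs `{i,j} ⊆ {1,…,⌊Ln²⌋}` with `|i−j| = 1` or `|i−j| = n`. -/
def energyL (L : ℝ) (n : ℕ) (u : ℕ → ℝ) : ℝ :=
  (1 / (n : ℝ)) *
    ∑ p ∈ (Finset.Icc 1 (Nat.floor (L * (n : ℝ) ^ 2)) ×ˢ
        Finset.Icc 1 (Nat.floor (L * (n : ℝ) ^ 2))).filter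
        (fun p => p.1 < p.2 ∧ (p.2 - p.1 = 1 ∨ p.2 - p.1 = n)),
      (u p.1 - u p.2) ^ 2

/-- The step function associated with a discrete spin function: `x ↦ u_i` for
`x ∈ ((i−1)/n², i/n²]`. -/
def stepFun (n : ℕ) (u : ℕ → ℝ) : ℝ → ℝ := fun x => u (⌈(n : ℝ) ^ 2 * x⌉.toNat)

/-- Weak-* convergence in `L^∞(I)`: `∫_I v_n g → ∫_I w g` for every integrable `g` on `I`. -/
def WeakStarTo (I : Set ℝ) (v : ℕ → ℝ → ℝ) (w : ℝ → ℝ) : Prop :=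
  ∀ g : ℝ → ℝ, IntegrableOn g I volume →
    Tendsto (fun n => ∫ x in I, v n x * g x) atTop (nhds (∫ x in I, w x * g x))

/-!
Cut the sites into rows of length `n` and fill row `r` with `m r` ones followed by zeros. Such a
terraced arrangement breaks at most two bonds in each row holding both values, about
`|m r - m (r + 1)|` vertical bonds between consecutive rows, and one more bond where `m` jumps.
Weak-* convergence only sees the row averages `m r / n`.

The row counts `m r = ⌊n v(x_r)⌋` sample `v` at one point per cell of a partition of `(0, L)` into
about `√n` cells. A common offset of the sample points is chosen by averaging, so that the cells
sampled in `{0 < v < 1}` have total length at most the measure of that set; a fixed offset may fail,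
since the set can be small in measure and still contain every sample point. The vertical bonds are
paid for by the total variation.

The number of ones is then off by some `d = o(n²)`. Because `0 < σ < 1`, some window of
`K = O(√d) = o(n)` consecutive rows has room for `d` changes of at most `K` per row. Spreading them
evenly over the window fixes the count exactly, at an energy cost of `O(K / n)`, without changing
the limit of the row averages.
-/

/-! ### Energy of terraced arrangements -/

/-- The `0`-`1` word that fills row `r` (positions `r n, …, r n + n - 1`) with `m r` ones followed
by zeros: a terraced arrangement of spins on a grid with rows of length `n`. -/
def rowWord (n : ℕ) (m : ℕ → ℕ) (j : ℕ) : ℝ := if j % n < m (j / n) then 1 else 0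

/-- The spin configuration on `{1, …, M}` read off `rowWord n m`. Positions of the word start at
`0`, whereas sites start at `1`. -/
def rowSpin (n M : ℕ) (m : ℕ → ℕ) (i : ℕ) : ℝ :=
  if i ∈ Finset.Icc 1 M then rowWord n m (i - 1) else 0

/-- Bound for `n` times the energy of the first `N` rows of `rowWord n m`. Each row costs `2` if it
holds both values, `1` if the next row is different (this pays for the bond joining the end of the
row to the start of the next one), and the number of vertical bonds broken towards the next row. -/
def rowCost (n N : ℕ) (m : ℕ → ℕ) : ℕ :=
  ∑ r ∈ Finset.range N, (2 * (if 0 < m r ∧ m r < n then 1 else 0) +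
    (if m r = m (r + 1) then 0 else 1) + ((m r : ℤ) - m (r + 1)).natAbs)

lemma sum_range_mul_eq_sum_rows {α : Type*} [AddCommMonoid α] (N n : ℕ) (f : ℕ → α) :
    ∑ j ∈ Finset.range (N * n), f j =
      ∑ r ∈ Finset.range N, ∑ c ∈ Finset.range n, f (r * n + c) := by
  induction N with
  | zero => simp
  | succ N ih => rw [add_one_mul, Finset.sum_range_add, ih, Finset.sum_range_succ]

lemma sum_bonds_le (M J d : ℕ) (hJ : M ≤ J) (u w : ℕ → ℝ)
    (huw : ∀ i ∈ Finset.Icc 1 M, u i = w (i - 1)) :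
    ∑ p ∈ (Finset.Icc 1 M ×ˢ Finset.Icc 1 M).filter (fun p => p.1 < p.2 ∧ p.2 - p.1 = d),
      (u p.1 - u p.2) ^ 2 ≤ ∑ j ∈ Finset.range J, (w j - w (j + d)) ^ 2 := by
  set S := (Finset.Icc 1 M ×ˢ Finset.Icc 1 M).filter fun p => p.1 < p.2 ∧ p.2 - p.1 = d with hS
  have hmem : ∀ p ∈ S, (1 ≤ p.1 ∧ p.1 ≤ M) ∧ (1 ≤ p.2 ∧ p.2 ≤ M) ∧ p.2 = p.1 + d := by
    simp only [hS, Finset.mem_filter, Finset.mem_product, Finset.mem_Icc]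
    omega
  have inj : InjOn (fun p : ℕ × ℕ => p.1 - 1) S := fun p hp q hq h => by
    have := hmem p hp
    have := hmem q hq
    exact Prod.ext (by grind) (by grind)
  calc ∑ p ∈ S, (u p.1 - u p.2) ^ 2
      = ∑ p ∈ S, (w (p.1 - 1) - w (p.1 - 1 + d)) ^ 2 := by
        refine Finset.sum_congr rfl fun p hp => ?_
        obtain ⟨h₁, h₂, h₃⟩ := hmem p hp
        rw [huw _ (Finset.mem_Icc.2 h₁), huw _ (Finset.mem_Icc.2 h₂),
          show p.2 - 1 = p.1 - 1 + d by omega]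
    _ = ∑ j ∈ S.image fun p => p.1 - 1, (w j - w (j + d)) ^ 2 := by
        rw [Finset.sum_image inj]
    _ ≤ ∑ j ∈ Finset.range J, (w j - w (j + d)) ^ 2 := by
        refine Finset.sum_le_sum_of_subset_of_nonneg (Finset.image_subset_iff.2 fun p hp => ?_)
          fun _ _ _ => sq_nonneg _
        have := hmem p hp
        exact Finset.mem_range.2 (by omega)

lemma energyL_le_sum_word (L : ℝ) (n J : ℕ) (u w : ℕ → ℝ) (hJ : ⌊L * (n : ℝ) ^ 2⌋₊ ≤ J)
    (huw : ∀ i ∈ Finset.Icc 1 ⌊L * (n : ℝ) ^ 2⌋₊, u i = w (i - 1)) :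
    energyL L n u ≤ 1 / n * (∑ j ∈ Finset.range J, (w j - w (j + 1)) ^ 2 +
      ∑ j ∈ Finset.range J, (w j - w (j + n)) ^ 2) := by
  refine mul_le_mul_of_nonneg_left ?_ (by positivity)
  refine le_trans ?_ (add_le_add (sum_bonds_le _ J 1 hJ u w huw) (sum_bonds_le _ J n hJ u w huw))
  rw [← Finset.sum_union_inter, ← Finset.filter_or]
  simp only [and_or_left]
  exact le_add_of_nonneg_right (Finset.sum_nonneg fun _ _ => sq_nonneg _)

lemma rowWord_mul_add {n c : ℕ} (m : ℕ → ℕ) (r : ℕ) (hc : c < n) :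
    rowWord n m (r * n + c) = if c < m r then 1 else 0 := by
  rw [rowWord, Nat.mul_add_mod_of_lt hc, mul_comm, Nat.mul_add_div (by omega),
    Nat.div_eq_of_lt hc, add_zero]

lemma sum_sq_rowWord_succ_le (n : ℕ) (m : ℕ → ℕ) (r : ℕ) :
    ∑ c ∈ Finset.range n, (rowWord n m (r * n + c) - rowWord n m (r * n + c + 1)) ^ 2 ≤
      2 * (if 0 < m r ∧ m r < n then 1 else 0) + (if m r = m (r + 1) then 0 else 1) := by
  obtain _ | k := n
  · simp only [Finset.range_zero, Finset.sum_empty]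
    positivity
  have within : ∑ c ∈ Finset.range k,
      (rowWord (k + 1) m (r * (k + 1) + c) - rowWord (k + 1) m (r * (k + 1) + c + 1)) ^ 2 ≤
        if 0 < m r ∧ m r < k + 1 then 1 else 0 := by
    calc _ = ∑ c ∈ Finset.range k, if c + 1 = m r then (1 : ℝ) else 0 := by
          refine Finset.sum_congr rfl fun c hc => ?_
          have hck := Finset.mem_range.1 hc
          rw [add_assoc (r * (k + 1)), rowWord_mul_add m r (by omega : c < k + 1),
            rowWord_mul_add m r (by omega : c + 1 < k + 1)]
          split_ifs <;> first | omega | norm_num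
      _ ≤ ∑ c ∈ Finset.range k, if c = m r - 1 then if 0 < m r then 1 else 0 else 0 := by
          refine Finset.sum_le_sum fun c _ => ?_
          split_ifs <;> first | omega | norm_num
      _ ≤ _ := by
          rw [Finset.sum_ite_eq']
          simp only [Finset.mem_range]
          split_ifs <;> first | omega | norm_num
  have across :
      (rowWord (k + 1) m (r * (k + 1) + k) - rowWord (k + 1) m (r * (k + 1) + k + 1)) ^ 2 ≤
        (if 0 < m r ∧ m r < k + 1 then 1 else 0) + (if m r = m (r + 1) then 0 else 1) := by
    rw [rowWord_mul_add m r k.lt_succ_self,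
      show r * (k + 1) + k + 1 = (r + 1) * (k + 1) + 0 by ring,
      rowWord_mul_add m (r + 1) k.succ_pos]
    split_ifs <;> first | omega | norm_num
  rw [Finset.sum_range_succ]
  linarith

lemma sum_sq_rowWord_add_le (n : ℕ) (m : ℕ → ℕ) (r : ℕ) :
    ∑ c ∈ Finset.range n, (rowWord n m (r * n + c) - rowWord n m (r * n + c + n)) ^ 2 ≤
      ((m r : ℤ) - m (r + 1)).natAbs := by
  set I := Finset.Ico (min (m r) (m (r + 1))) (max (m r) (m (r + 1))) with hI
  calc ∑ c ∈ Finset.range n, (rowWord n m (r * n + c) - rowWord n m (r * n + c + n)) ^ 2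
      = ∑ c ∈ Finset.range n, if c ∈ I then (1 : ℝ) else 0 := by
        refine Finset.sum_congr rfl fun c hc => ?_
        rw [add_right_comm, ← add_one_mul, rowWord_mul_add m r (Finset.mem_range.1 hc),
          rowWord_mul_add m (r + 1) (Finset.mem_range.1 hc)]
        simp only [hI, Finset.mem_Ico, min_le_iff, lt_max_iff]
        split_ifs <;> first | omega | norm_num
    _ = (Finset.range n ∩ I).card := by rw [Finset.sum_boole, Finset.filter_mem_eq_inter]
    _ ≤ I.card := Nat.cast_le.2 (Finset.card_le_card Finset.inter_subset_right)
    _ ≤ ((m r : ℤ) - m (r + 1)).natAbs := by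
        rw [hI, Nat.card_Ico]
        exact Nat.cast_le.2 (by omega)

lemma energyL_rowSpin_le (L : ℝ) {n : ℕ} (hn : 0 < n) (m : ℕ → ℕ) :
    energyL L n (rowSpin n ⌊L * (n : ℝ) ^ 2⌋₊ m) ≤
      1 / n * rowCost n (⌊L * (n : ℝ) ^ 2⌋₊ / n + 1) m := by
  set M := ⌊L * (n : ℝ) ^ 2⌋₊
  refine (energyL_le_sum_word L n ((M / n + 1) * n) _ (rowWord n m)
    (Nat.lt_div_mul_add hn |>.le.trans_eq (add_one_mul _ _).symm) fun i hi => if_pos hi).trans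
    (mul_le_mul_of_nonneg_left ?_ (by positivity))
  rw [sum_range_mul_eq_sum_rows, sum_range_mul_eq_sum_rows, ← Finset.sum_add_distrib, rowCost]
  push_cast
  exact Finset.sum_le_sum fun r _ =>
    add_le_add (sum_sq_rowWord_succ_le n m r) (by simpa using sum_sq_rowWord_add_le n m r)

/-! ### Test integrals of functions with zero mean on cells -/

lemma abs_integral_mul_le_of_integral_eq_zero {D h : ℝ → ℝ} {a b ω : ℝ} (hab : a ≤ b)
    (hD : IntervalIntegrable D volume a b)
    (hDh : IntervalIntegrable (fun x => D x * h x) volume a b) (hD_le : ∀ x, |D x| ≤ 1)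
    (hD_zero : ∫ x in a..b, D x = 0) (hω : ∀ x ∈ Ioc a b, |h x - h a| ≤ ω) :
    |∫ x in a..b, D x * h x| ≤ ω * (b - a) := by
  have recentred : ∫ x in a..b, D x * h x = ∫ x in a..b, D x * (h x - h a) := by
    simp only [mul_sub]
    rw [intervalIntegral.integral_sub hDh (hD.mul_const _), intervalIntegral.integral_mul_const,
      hD_zero, zero_mul, sub_zero]
  rw [recentred, ← abs_of_nonneg (sub_nonneg.2 hab), ← Real.norm_eq_abs]
  refine intervalIntegral.norm_integral_le_of_norm_le_const fun x hx => ?_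
  rw [Real.norm_eq_abs, abs_mul]
  rw [uIoc_of_le hab] at hx
  exact (mul_le_of_le_one_left (abs_nonneg _) (hD_le x)).trans (hω x hx)

lemma abs_integral_mul_le_of_zero_mean_cells {D h : ℝ → ℝ} {L C ω : ℝ} {n R : ℕ}
    (hR : (R : ℝ) / n ≤ L) (hD : Measurable D) (hD_le : ∀ x, |D x| ≤ 1) (hh : Continuous h)
    (hC : ∀ x, |h x| ≤ C) (hω : ∀ x y : ℝ, |x - y| ≤ 1 / n → |h x - h y| ≤ ω)
    (hD_zero : ∀ r < R, ∫ x in (r : ℝ) / n..((r + 1 : ℕ) : ℝ) / n, D x = 0) :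
    |∫ x in (0 : ℝ)..L, D x * h x| ≤ ω * (R / n) + C * (L - R / n) := by
  have integrable_of_le {f : ℝ → ℝ} {K : ℝ} (hf : Measurable f) (hK : ∀ x, |f x| ≤ K) (a b : ℝ) :
      IntervalIntegrable f volume a b :=
    intervalIntegrable_iff.2 <| Measure.integrableOn_of_bounded (M := K) (by simp)
      hf.aestronglyMeasurable (Eventually.of_forall hK)
  have hDh_le (x : ℝ) : |D x * h x| ≤ C := by
    rw [abs_mul]
    exact (mul_le_of_le_one_left (abs_nonneg _) (hD_le x)).trans (hC x)
  have hDh : ∀ a b, IntervalIntegrable (fun x => D x * h x) volume a b :=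
    integrable_of_le (hD.mul hh.measurable) hDh_le
  have cell (r : ℕ) (hr : r < R) :
      |∫ x in (r : ℝ) / n..((r + 1 : ℕ) : ℝ) / n, D x * h x| ≤ ω * (1 / n) := by
    have hlen : ((r + 1 : ℕ) : ℝ) / n - r / n = 1 / n := by push_cast; ring
    have hle : (r : ℝ) / n ≤ ((r + 1 : ℕ) : ℝ) / n := by gcongr; exact r.le_succ
    rw [← hlen]
    refine abs_integral_mul_le_of_integral_eq_zero hle (integrable_of_le hD hD_le _ _) (hDh _ _)
      hD_le (hD_zero r hr) fun x hx => hω _ _ ?_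
    rw [abs_of_nonneg (sub_nonneg.2 hx.1.le), ← hlen]
    linarith [hx.2]
  have full_cells : |∫ x in (0 : ℝ)..R / n, D x * h x| ≤ ω * (R / n) := by
    have split := intervalIntegral.sum_integral_adjacent_intervals (f := fun x => D x * h x)
      (a := fun r : ℕ => (r : ℝ) / n) (n := R) fun r _ => hDh _ _
    rw [Nat.cast_zero, zero_div] at split
    rw [← split]
    refine (Finset.abs_sum_le_sum_abs _ _).trans
      ((Finset.sum_le_sum fun r hr => cell r (Finset.mem_range.1 hr)).trans_eq ?_)
    rw [Finset.sum_const, Finset.card_range, nsmul_eq_mul]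
    ring
  have rest : |∫ x in (R : ℝ) / n..L, D x * h x| ≤ C * (L - R / n) := by
    rw [← Real.norm_eq_abs, ← abs_of_nonneg (sub_nonneg.2 hR)]
    exact intervalIntegral.norm_integral_le_of_norm_le_const fun x _ => hDh_le x
  rw [← intervalIntegral.integral_add_adjacent_intervals (hDh 0 (R / n)) (hDh _ L)]
  exact (abs_add_le _ _).trans (add_le_add full_cells rest)

lemma tendsto_integral_mul_of_zero_mean_cells {D : ℕ → ℝ → ℝ} {R : ℕ → ℕ} {L : ℝ} {h : ℝ → ℝ}
    (hR : ∀ᶠ n in atTop, (R n : ℝ) / n ≤ L) (hRL : Tendsto (fun n => (R n : ℝ) / n) atTop (nhds L))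
    (hD : ∀ n, Measurable (D n)) (hD_le : ∀ᶠ n in atTop, ∀ x, |D n x| ≤ 1)
    (hD_zero : ∀ᶠ n in atTop, ∀ r < R n, ∫ x in (r : ℝ) / n..((r + 1 : ℕ) : ℝ) / n, D n x = 0)
    (hh : Continuous h) (hsupp : HasCompactSupport h) :
    Tendsto (fun n => ∫ x in (0 : ℝ)..L, D n x * h x) atTop (nhds 0) := by
  obtain ⟨C, hC⟩ := hh.bounded_above_of_compact_support hsupp
  have huc := Metric.uniformContinuous_iff.1
    (hh.uniformContinuous_of_tendsto_cocompact hsupp.is_zero_at_infty)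
  have hL : 0 ≤ L := ge_of_tendsto' hRL fun n => by positivity
  refine Metric.tendsto_nhds.2 fun ε hε => ?_
  obtain ⟨δ, hδ, hδh⟩ := huc (ε / (2 * (L + 1))) (by positivity)
  have bound : Tendsto (fun n => ε / (2 * (L + 1)) * (R n / n) + C * (L - R n / n)) atTop
      (nhds (ε / (2 * (L + 1)) * L + C * (L - L))) :=
    (hRL.const_mul _).add ((tendsto_const_nhds.sub hRL).const_mul _)
  have limit_lt : ε / (2 * (L + 1)) * L + C * (L - L) < ε := by
    rw [sub_self, mul_zero, add_zero, div_mul_eq_mul_div, div_lt_iff₀ (by positivity)]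
    nlinarith
  filter_upwards [hR, hD_le, hD_zero, bound.eventually_lt_const limit_lt,
    tendsto_one_div_atTop_nhds_zero_nat.eventually_lt_const hδ] with n hR hD_le hD_zero hlt hn
  rw [Real.dist_eq, sub_zero]
  exact (abs_integral_mul_le_of_zero_mean_cells hR (hD n) hD_le hh hC
    (fun x y hxy => (hδh (hxy.trans_lt hn)).le) hD_zero).trans_lt hlt

lemma tendsto_integral_mul_of_hasCompactSupport {ι α : Type*} {l : Filter ι} [TopologicalSpace α]
    [NormalSpace α] [R1Space α] [WeaklyLocallyCompactSpace α] [MeasurableSpace α] [BorelSpace α]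
    {μ : Measure α} [μ.Regular] {D : ι → α → ℝ} (hD : ∀ n, Measurable (D n))
    (hD_le : ∀ᶠ n in l, ∀ x, |D n x| ≤ 1)
    (hD_test : ∀ h : α → ℝ, Continuous h → HasCompactSupport h →
      Tendsto (fun n => ∫ x, D n x * h x ∂μ) l (nhds 0))
    {g : α → ℝ} (hg : Integrable g μ) :
    Tendsto (fun n => ∫ x, D n x * g x ∂μ) l (nhds 0) := by
  refine Metric.tendsto_nhds.2 fun ε hε => ?_
  obtain ⟨h, hsupp, hgh, hcont, hint⟩ :=
    hg.exists_hasCompactSupport_integral_sub_le (half_pos hε)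
  filter_upwards [hD_le, Metric.tendsto_nhds.1 (hD_test h hcont hsupp) _ (half_pos hε)]
    with n hD_le hn
  rw [Real.dist_eq, sub_zero] at hn ⊢
  have integrable_mul {f : α → ℝ} (hf : Integrable f μ) : Integrable (fun x => D n x * f x) μ :=
    hf.bdd_mul (c := 1) (hD n).aestronglyMeasurable (Eventually.of_forall hD_le)
  have hsub : Integrable (fun x => g x - h x) μ := hg.sub hint
  have approx : |∫ x, D n x * (g x - h x) ∂μ| ≤ ε / 2 := by
    rw [← Real.norm_eq_abs]
    refine (norm_integral_le_of_norm_le hsub.norm (Eventually.of_forall fun x => ?_)).trans hgh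
    rw [norm_mul]
    exact mul_le_of_le_one_left (norm_nonneg _) (hD_le x)
  have split : ∫ x, D n x * g x ∂μ = (∫ x, D n x * h x ∂μ) + ∫ x, D n x * (g x - h x) ∂μ := by
    rw [← integral_add (integrable_mul hint) (integrable_mul hsub)]
    exact integral_congr_ae (Eventually.of_forall fun x => by ring)
  rw [split]
  exact (abs_add_le _ _).trans_lt (by linarith)

/-! ### Counting and averaging over rows -/

/-- Row-by-row average of `rowSpin n M m`, as a step function: `m r / n` on `(r/n, (r+1)/n]`. Rows
are numbered from `0`, hence the shift by one in the index. -/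
def rowDensity (n : ℕ) (m : ℕ → ℕ) (x : ℝ) : ℝ := m (⌈(n : ℝ) * x⌉₊ - 1) / n

/-- Number of ones of `rowSpin n M m`: the last row is cut off after `M % n` sites. -/
def numOnes (n M : ℕ) (m : ℕ → ℕ) : ℕ :=
  ∑ r ∈ Finset.range (M / n), m r + min (m (M / n)) (M % n)

lemma measurable_natCeil_mul (a : ℕ → ℝ) (c : ℝ) : Measurable fun x : ℝ => a ⌈c * x⌉₊ :=
  measurable_from_top.comp (Nat.measurable_ceil.comp (measurable_const_mul c))

lemma eqOn_natCeil (a : ℕ → ℝ) (i : ℕ) :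
    EqOn (fun x : ℝ => a ⌈x⌉₊) (fun _ => a (i + 1)) (uIoo (i : ℝ) ((i + 1 : ℕ) : ℝ)) := by
  intro x hx
  rw [uIoo_of_le (Nat.cast_le.2 i.le_succ)] at hx
  exact congrArg a ((Nat.ceil_eq_iff i.succ_ne_zero).2 ⟨by simpa using hx.1, hx.2.le⟩)

lemma integral_natCeil (a : ℕ → ℝ) {p q : ℕ} (hpq : p ≤ q) :
    ∫ x in (p : ℝ)..q, a ⌈x⌉₊ = ∑ i ∈ Finset.Ico p q, a (i + 1) := by
  rw [← intervalIntegral.sum_integral_adjacent_intervals_Ico (a := fun i : ℕ => (i : ℝ)) hpq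
    fun i _ => (intervalIntegrable_congr_uIoo (eqOn_natCeil a i)).2 intervalIntegrable_const]
  refine Finset.sum_congr rfl fun i _ => ?_
  rw [intervalIntegral.integral_congr_uIoo (eqOn_natCeil a i), intervalIntegral.integral_const]
  simp

lemma integral_natCeil_mul (a : ℕ → ℝ) {p q : ℕ} (hpq : p ≤ q) {c : ℝ} (hc : c ≠ 0) :
    ∫ x in (p / c)..(q / c), a ⌈c * x⌉₊ = (∑ i ∈ Finset.Ico p q, a (i + 1)) / c := by
  rw [intervalIntegral.integral_comp_mul_left (fun x => a ⌈x⌉₊) hc, mul_div_cancel₀ _ hc,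
    mul_div_cancel₀ _ hc, integral_natCeil a hpq, smul_eq_mul, inv_mul_eq_div]

lemma integral_rowDensity_row {n : ℕ} (hn : 0 < n) (m : ℕ → ℕ) (r : ℕ) :
    ∫ x in (r : ℝ) / n..((r + 1 : ℕ) : ℝ) / n, rowDensity n m x = m r / (n : ℝ) ^ 2 := by
  simp only [rowDensity]
  rw [integral_natCeil_mul (fun i => (m (i - 1) : ℝ) / n) r.le_succ (Nat.cast_ne_zero.2 hn.ne')]
  simp [div_div, sq]

lemma sum_rowWord_row {n : ℕ} {m : ℕ → ℕ} {r a : ℕ} (ha : a ≤ n) :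
    ∑ c ∈ Finset.range a, rowWord n m (r * n + c) = (min (m r) a : ℕ) := by
  calc ∑ c ∈ Finset.range a, rowWord n m (r * n + c)
      = ∑ c ∈ Finset.range a, if c < m r then 1 else 0 :=
        Finset.sum_congr rfl fun c hc =>
          rowWord_mul_add m r ((Finset.mem_range.1 hc).trans_le ha)
    _ = ((Finset.range (min (m r) a)).card : ℝ) := by
        rw [Finset.sum_boole]
        congr 2
        ext c
        simp [and_comm]
    _ = (min (m r) a : ℕ) := by rw [Finset.card_range]

lemma rowSpin_succ {n M : ℕ} (m : ℕ → ℕ) {j : ℕ} (hj : j < M) :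
    rowSpin n M m (j + 1) = rowWord n m j :=
  if_pos (Finset.mem_Icc.2 ⟨by omega, hj⟩)

lemma rowSpin_eq_zero_or_one (n M : ℕ) (m : ℕ → ℕ) (i : ℕ) :
    rowSpin n M m i = 0 ∨ rowSpin n M m i = 1 := by
  unfold rowSpin rowWord
  split_ifs <;> simp

lemma sum_rowSpin {n : ℕ} (hn : 0 < n) (M : ℕ) {m : ℕ → ℕ} (hm : ∀ r, m r ≤ n) :
    ∑ j ∈ Finset.range M, rowSpin n M m (j + 1) = numOnes n M m := by
  calc ∑ j ∈ Finset.range M, rowSpin n M m (j + 1) = ∑ j ∈ Finset.range M, rowWord n m j :=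
        Finset.sum_congr rfl fun j hj => rowSpin_succ m (Finset.mem_range.1 hj)
    _ = ∑ r ∈ Finset.range (M / n), ∑ c ∈ Finset.range n, rowWord n m (r * n + c) +
          ∑ c ∈ Finset.range (M % n), rowWord n m (M / n * n + c) := by
        rw [← sum_range_mul_eq_sum_rows, ← Finset.sum_range_add, Nat.div_add_mod']
    _ = numOnes n M m := by
        rw [sum_rowWord_row (Nat.mod_lt M hn).le, numOnes, Nat.cast_add, Nat.cast_sum]
        simp only [sum_rowWord_row le_rfl, min_eq_left (hm _)]

lemma admDisc_rowSpin {L : ℝ} {n : ℕ} (hn : 0 < n) {m : ℕ → ℕ} (hm : ∀ r, m r ≤ n) :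
    AdmDisc L n (numOnes n ⌊L * (n : ℝ) ^ 2⌋₊ m) (rowSpin n ⌊L * (n : ℝ) ^ 2⌋₊ m) := by
  set M := ⌊L * (n : ℝ) ^ 2⌋₊
  refine ⟨fun i _ => rowSpin_eq_zero_or_one n M m i, fun i hi => if_neg hi, ?_⟩
  have indicator (i : ℕ) : (if rowSpin n M m i = 1 then 1 else 0) = rowSpin n M m i := by
    obtain h | h := rowSpin_eq_zero_or_one n M m i <;> simp [h]
  rw [← Nat.cast_inj (R := ℝ), ← sum_rowSpin hn M hm, ← Finset.sum_boole,
    Finset.range_eq_Ico, Finset.sum_Ico_add' (rowSpin n M m) 0 M 1, zero_add]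
  exact Finset.sum_congr rfl fun i _ => indicator i

lemma integral_stepFun_row {n M : ℕ} (hn : 0 < n) {m : ℕ → ℕ} (hm : ∀ r, m r ≤ n) {r : ℕ}
    (hr : r < M / n) :
    ∫ x in (r : ℝ) / n..((r + 1 : ℕ) : ℝ) / n, stepFun n (rowSpin n M m) x =
      m r / (n : ℝ) ^ 2 := by
  have hn' : (n : ℝ) ≠ 0 := Nat.cast_ne_zero.2 hn.ne'
  have hrM : (r + 1) * n ≤ M := (Nat.mul_le_mul_right n hr).trans (Nat.div_mul_le_self M n)
  have endpoint (s : ℕ) : (s : ℝ) / n = ((s * n : ℕ) : ℝ) / (n : ℝ) ^ 2 := by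
    push_cast
    field_simp
  calc ∫ x in (r : ℝ) / n..((r + 1 : ℕ) : ℝ) / n, stepFun n (rowSpin n M m) x
      = (∑ i ∈ Finset.Ico (r * n) ((r + 1) * n), rowSpin n M m (i + 1)) / (n : ℝ) ^ 2 := by
        rw [endpoint r, endpoint (r + 1)]
        exact integral_natCeil_mul _ (Nat.mul_le_mul_right n r.le_succ) (pow_ne_zero 2 hn')
    _ = (∑ c ∈ Finset.range n, rowWord n m (r * n + c)) / (n : ℝ) ^ 2 := by
        rw [Finset.sum_Ico_eq_sum_range, ← Nat.sub_mul, Nat.add_sub_cancel_left, one_mul]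
        congr 1
        refine Finset.sum_congr rfl fun c hc => rowSpin_succ m ?_
        grind
    _ = m r / (n : ℝ) ^ 2 := by
        rw [sum_rowWord_row le_rfl, min_eq_left (hm r)]

lemma integral_stepFun_rowSpin {L : ℝ} (hL : 0 ≤ L) {n : ℕ} (hn : 0 < n) {m : ℕ → ℕ}
    (hm : ∀ r, m r ≤ n) :
    ∫ x in Ioo 0 L, stepFun n (rowSpin n ⌊L * (n : ℝ) ^ 2⌋₊ m) x =
      numOnes n ⌊L * (n : ℝ) ^ 2⌋₊ m / (n : ℝ) ^ 2 := by
  have hn2 : (0 : ℝ) < (n : ℝ) ^ 2 := by positivity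
  set M := ⌊L * (n : ℝ) ^ 2⌋₊
  set f := stepFun n (rowSpin n M m)
  have hML : (M : ℝ) / (n : ℝ) ^ 2 ≤ L := (div_le_iff₀ hn2).2 (Nat.floor_le (by positivity))
  have full : ∫ x in (0 : ℝ)..M / (n : ℝ) ^ 2, f x = numOnes n M m / (n : ℝ) ^ 2 := by
    have := integral_natCeil_mul (rowSpin n M m) M.zero_le hn2.ne'
    rwa [Nat.cast_zero, zero_div, ← Finset.range_eq_Ico, sum_rowSpin hn M hm] at this
  have beyond (x : ℝ) (hx : M / (n : ℝ) ^ 2 < x) : f x = 0 := by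
    have : M < ⌈(n : ℝ) ^ 2 * x⌉₊ := Nat.lt_ceil.2 ((div_lt_iff₀' hn2).1 hx)
    exact if_neg fun h => (Finset.mem_Icc.1 h).2.not_gt this
  rw [← integral_Ioc_eq_integral_Ioo, ← full, intervalIntegral.integral_of_le (by positivity)]
  exact setIntegral_eq_of_subset_of_forall_sdiff_eq_zero measurableSet_Ioc
    (Ioc_subset_Ioc_right hML) fun x hx => beyond x <| by grind

/-! ### Weak-* convergence through row densities -/

lemma floor_mul_sq_div (L : ℝ) (n : ℕ) : ⌊L * (n : ℝ) ^ 2⌋₊ / n = ⌊L * n⌋₊ := by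
  obtain rfl | hn := n.eq_zero_or_pos
  · simp
  rw [← Nat.floor_div_natCast, sq, ← mul_assoc, mul_div_cancel_right₀ _ (by positivity)]

lemma tendsto_floor_mul_sq_div {L : ℝ} (hL : 0 ≤ L) :
    Tendsto (fun n : ℕ => ((⌊L * (n : ℝ) ^ 2⌋₊ / n : ℕ) : ℝ) / n) atTop (nhds L) := by
  simp only [floor_mul_sq_div]
  exact (tendsto_nat_floor_mul_div_atTop hL).comp tendsto_natCast_atTop_atTop

lemma measurable_rowDensity (n : ℕ) (m : ℕ → ℕ) : Measurable (rowDensity n m) :=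
  measurable_natCeil_mul (fun i => (m (i - 1) : ℝ) / n) n

lemma measurable_stepFun (n : ℕ) (u : ℕ → ℝ) : Measurable (stepFun n u) :=
  measurable_natCeil_mul u _

lemma rowDensity_mem_Icc {n : ℕ} {m : ℕ → ℕ} (hm : ∀ r, m r ≤ n) (x : ℝ) :
    rowDensity n m x ∈ Icc 0 1 :=
  ⟨by unfold rowDensity; positivity, div_le_one_of_le₀ (Nat.cast_le.2 (hm _)) n.cast_nonneg⟩

lemma stepFun_rowSpin_mem_Icc (n M : ℕ) (m : ℕ → ℕ) (x : ℝ) :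
    stepFun n (rowSpin n M m) x ∈ Icc 0 1 := by
  obtain h | h := rowSpin_eq_zero_or_one n M m ⌈(n : ℝ) ^ 2 * x⌉.toNat <;> simp [stepFun, h]

lemma integrable_mul_of_mem_Icc {α : Type*} [MeasurableSpace α] {μ : Measure α} {f g : α → ℝ}
    (hf : Measurable f) (hf01 : ∀ x, f x ∈ Icc 0 1) (hg : Integrable g μ) :
    Integrable (fun x => f x * g x) μ :=
  hg.bdd_mul (c := 1) hf.aestronglyMeasurable <| Eventually.of_forall fun x => by
    rw [Real.norm_of_nonneg (hf01 x).1]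
    exact (hf01 x).2

lemma intervalIntegrable_of_mem_Icc {f : ℝ → ℝ} (hf : Measurable f) (hf01 : ∀ x, f x ∈ Icc 0 1)
    (a b : ℝ) : IntervalIntegrable f volume a b :=
  intervalIntegrable_iff.2 <| Measure.integrableOn_of_bounded (M := 1) (by simp)
    hf.aestronglyMeasurable <| Eventually.of_forall fun x => by
      rw [Real.norm_of_nonneg (hf01 x).1]
      exact (hf01 x).2

lemma tendsto_integral_rowDensity_mul {I : Set ℝ} {m : ℕ → ℕ → ℕ}
    (hm : ∀ᶠ n in atTop, ∀ r, m n r ≤ n) {v : ℝ → ℝ}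
    (hv : ∀ᵐ x ∂volume.restrict I, Tendsto (fun n => rowDensity n (m n) x) atTop (nhds (v x)))
    {g : ℝ → ℝ} (hg : IntegrableOn g I) :
    Tendsto (fun n => ∫ x in I, rowDensity n (m n) x * g x) atTop
      (nhds (∫ x in I, v x * g x)) := by
  refine tendsto_integral_filter_of_dominated_convergence (fun x => ‖g x‖)
    (Eventually.of_forall fun n => (measurable_rowDensity n (m n)).aestronglyMeasurable.mul
      hg.aestronglyMeasurable) ?_ hg.norm ?_
  · filter_upwards [hm] with n hm
    refine Eventually.of_forall fun x => ?_
    obtain ⟨h0, h1⟩ := rowDensity_mem_Icc hm x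
    rw [norm_mul, Real.norm_of_nonneg h0]
    exact mul_le_of_le_one_left (norm_nonneg _) h1
  · filter_upwards [hv] with x hx
    exact hx.mul_const _

lemma tendsto_integral_stepFun_sub_rowDensity_mul {L : ℝ} (hL : 0 ≤ L) {m : ℕ → ℕ → ℕ}
    (hm : ∀ᶠ n in atTop, ∀ r, m n r ≤ n) {g : ℝ → ℝ} (hg : IntegrableOn g (Ioo 0 L)) :
    Tendsto (fun n => ∫ x in Ioo 0 L, (stepFun n (rowSpin n ⌊L * (n : ℝ) ^ 2⌋₊ (m n)) x -
      rowDensity n (m n) x) * g x) atTop (nhds 0) := by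
  set D : ℕ → ℝ → ℝ := fun n x =>
    stepFun n (rowSpin n ⌊L * (n : ℝ) ^ 2⌋₊ (m n)) x - rowDensity n (m n) x
  have hD (n : ℕ) : Measurable (D n) := (measurable_stepFun _ _).sub (measurable_rowDensity _ _)
  have hD_le : ∀ᶠ n in atTop, ∀ x, |D n x| ≤ 1 := by
    filter_upwards [hm] with n hm x
    have hstep := stepFun_rowSpin_mem_Icc n ⌊L * (n : ℝ) ^ 2⌋₊ (m n) x
    have hdens := rowDensity_mem_Icc hm x
    exact abs_sub_le_of_nonneg_of_le hstep.1 hstep.2 hdens.1 hdens.2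
  have hD_zero : ∀ᶠ n : ℕ in atTop, ∀ r < ⌊L * (n : ℝ) ^ 2⌋₊ / n,
      ∫ x in (r : ℝ) / n..((r + 1 : ℕ) : ℝ) / n, D n x = 0 := by
    filter_upwards [hm, eventually_gt_atTop 0] with n hm hn r hr
    rw [intervalIntegral.integral_sub
      (intervalIntegrable_of_mem_Icc (measurable_stepFun _ _) (stepFun_rowSpin_mem_Icc _ _ _) _ _)
      (intervalIntegrable_of_mem_Icc (measurable_rowDensity _ _) (rowDensity_mem_Icc hm) _ _),
      integral_stepFun_row hn hm hr, integral_rowDensity_row hn, sub_self]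
  have hR : ∀ᶠ n : ℕ in atTop, ((⌊L * (n : ℝ) ^ 2⌋₊ / n : ℕ) : ℝ) / n ≤ L := by
    filter_upwards [eventually_gt_atTop 0] with n hn
    rw [floor_mul_sq_div, div_le_iff₀ (by positivity)]
    exact Nat.floor_le (by positivity)
  refine tendsto_integral_mul_of_hasCompactSupport hD hD_le (fun h hh hsupp => ?_) hg
  simp only [← integral_Ioc_eq_integral_Ioo, ← intervalIntegral.integral_of_le hL]
  exact tendsto_integral_mul_of_zero_mean_cells hR (tendsto_floor_mul_sq_div hL) hD hD_le hD_zero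
    hh hsupp

lemma weakStarTo_rowSpin {L : ℝ} (hL : 0 ≤ L) {m : ℕ → ℕ → ℕ}
    (hm : ∀ᶠ n in atTop, ∀ r, m n r ≤ n) {v : ℝ → ℝ}
    (hv : ∀ᵐ x ∂volume.restrict (Ioo 0 L),
      Tendsto (fun n => rowDensity n (m n) x) atTop (nhds (v x))) :
    WeakStarTo (Ioo 0 L) (fun n => stepFun n (rowSpin n ⌊L * (n : ℝ) ^ 2⌋₊ (m n))) v := by
  intro g hg
  have sum := (tendsto_integral_stepFun_sub_rowDensity_mul hL hm hg).add
    (tendsto_integral_rowDensity_mul hm hv hg)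
  rw [zero_add] at sum
  refine sum.congr' ?_
  filter_upwards [hm] with n hm
  simp only [sub_mul]
  rw [integral_sub (integrable_mul_of_mem_Icc (measurable_stepFun _ _)
    (stepFun_rowSpin_mem_Icc _ _ _) hg) (integrable_mul_of_mem_Icc (measurable_rowDensity _ _)
    (rowDensity_mem_Icc hm) hg), sub_add_cancel]

lemma tendsto_numOnes_div {L : ℝ} (hL : 0 ≤ L) {m : ℕ → ℕ → ℕ}
    (hm : ∀ᶠ n in atTop, ∀ r, m n r ≤ n) {v : ℝ → ℝ}
    (hv : ∀ᵐ x ∂volume.restrict (Ioo 0 L),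
      Tendsto (fun n => rowDensity n (m n) x) atTop (nhds (v x))) :
    Tendsto (fun n => (numOnes n ⌊L * (n : ℝ) ^ 2⌋₊ (m n) : ℝ) / (n : ℝ) ^ 2) atTop
      (nhds (∫ x in Ioo 0 L, v x)) := by
  have test := weakStarTo_rowSpin hL hm hv (fun _ => 1) (integrableOn_const (by simp))
  simp only [mul_one] at test
  refine test.congr' ?_
  filter_upwards [hm, eventually_gt_atTop 0] with n hm hn
  exact integral_stepFun_rowSpin hL hn hm

/-! ### Row counts sampled from a function of bounded variation -/

/-- The limit energy: every point where `v` is not pure phase costs `2` per unit length, on top of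
the total variation of `v`. -/
def limitEnergy (L : ℝ) (v : ℝ → ℝ) : ℝ≥0∞ :=
  2 * volume {x ∈ Ioo 0 L | 0 < v x ∧ v x < 1} + eVariationOn v (Ioo 0 L)

lemma limitEnergy_ne_top {L : ℝ} {v : ℝ → ℝ} (hv : BoundedVariationOn v (Ioo 0 L)) :
    limitEnergy L v ≠ ∞ :=
  ENNReal.add_ne_top.2
    ⟨ENNReal.mul_ne_top (by simp) (measure_ne_top_of_subset (sep_subset _ _) (by simp)), hv⟩

lemma lintegral_card_translates_le {S : Set ℝ} (hS : MeasurableSet S) (w : ℝ) (B : ℕ) :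
    ∫⁻ t in Ioo 0 w, (((Finset.range B).filter fun b : ℕ => w * b + t ∈ S).card : ℝ≥0∞) ≤
      volume S := by
  set shift : ℕ → ℝ → ℝ := fun b t => w * b + t
  set cell : ℕ → Set ℝ := fun b => Ioo ((b : ℤ) • w) (((b : ℤ) + 1) • w)
  have hpre (b : ℕ) : MeasurableSet (shift b ⁻¹' S) := (measurable_const_add _) hS
  have hcell (b : ℕ) : volume (shift b ⁻¹' S ∩ Ioo 0 w) = volume (S ∩ cell b) := by
    rw [← measure_preimage_add volume (w * b) (S ∩ cell b)]
    congr 1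
    ext t
    simp [shift, cell, add_mul, mul_comm w]
  have hdisj : Pairwise (Function.onFun Disjoint cell) :=
    (pairwise_disjoint_Ioo_zsmul w).comp_of_injective Nat.cast_injective
  calc ∫⁻ t in Ioo 0 w, (((Finset.range B).filter fun b : ℕ => w * b + t ∈ S).card : ℝ≥0∞)
      = ∫⁻ t in Ioo 0 w, ∑ b ∈ Finset.range B, (shift b ⁻¹' S).indicator 1 t := by
        simp only [indicator_apply, mem_preimage, Pi.one_apply, Finset.sum_boole, shift]
    _ = ∑ b ∈ Finset.range B, volume (S ∩ cell b) := by
        rw [lintegral_finsetSum _ fun b _ => measurable_one.indicator (hpre b)]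
        refine Finset.sum_congr rfl fun b _ => ?_
        rw [lintegral_indicator_one (hpre b), Measure.restrict_apply (hpre b), hcell]
    _ = volume (⋃ b ∈ Finset.range B, S ∩ cell b) :=
        (measure_biUnion_finset (fun a _ b _ hab => (hdisj hab).mono inter_subset_right
          inter_subset_right) fun b _ => hS.inter measurableSet_Ioo).symm
    _ ≤ volume S := measure_mono (iUnion₂_subset fun _ _ => inter_subset_left)

lemma exists_offset_card_mul_le (S : Set ℝ) {w : ℝ} (hw : 0 < w) (B : ℕ) :
    ∃ t ∈ Ioo 0 w, (((Finset.range B).filter fun b : ℕ => w * b + t ∈ S).card : ℝ≥0∞) *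
      ENNReal.ofReal w ≤ volume S := by
  set T := toMeasurable volume S
  set count : ℝ → ℝ≥0∞ := fun t => ((Finset.range B).filter fun b : ℕ => w * b + t ∈ T).card
  have hcount : Measurable count := by
    simp only [count, ← Finset.sum_boole]
    refine Finset.measurable_fun_sum _ fun b _ =>
      Measurable.ite (p := fun t => w * b + t ∈ T) ?_ measurable_const measurable_const
    exact measurable_const_add (w * b) (measurableSet_toMeasurable volume S)
  have hvol : volume (Ioo 0 w) = ENNReal.ofReal w := by simp
  have hw0 : ENNReal.ofReal w ≠ 0 := by simpa using hw
  obtain ⟨t, ht, below_average⟩ := exists_le_setLAverage (μ := volume) (s := Ioo 0 w) (f := count)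
    (hvol ▸ hw0) (by simp) hcount.aemeasurable
  rw [setLAverage_eq, hvol] at below_average
  refine ⟨t, ht, ?_⟩
  calc _ ≤ count t * ENNReal.ofReal w := by
        gcongr
        exact Nat.cast_le.2 <| Finset.card_le_card <| Finset.monotone_filter_right _
          fun b _ hb => subset_toMeasurable volume S hb
    _ ≤ (∫⁻ t in Ioo 0 w, count t) / ENNReal.ofReal w * ENNReal.ofReal w := by gcongr
    _ = ∫⁻ t in Ioo 0 w, count t := ENNReal.div_mul_cancel hw0 ENNReal.ofReal_ne_top
    _ ≤ volume T := lintegral_card_translates_le (measurableSet_toMeasurable _ _) w B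
    _ = volume S := measure_toMeasurable S

lemma natAbs_floor_sub_floor_le {a b : ℝ} (ha : 0 ≤ a) (hb : 0 ≤ b) :
    (((⌊a⌋₊ : ℤ) - ⌊b⌋₊).natAbs : ℝ) ≤ |a - b| + 1 := by
  rw [Nat.cast_natAbs]
  push_cast
  have h₁ := Nat.floor_le ha
  have h₂ := Nat.lt_floor_add_one a
  have h₃ := Nat.floor_le hb
  have h₄ := Nat.lt_floor_add_one b
  have h₅ := abs_le.1 (le_refl |a - b|)
  exact abs_le.2 ⟨by linarith, by linarith⟩

lemma sum_abs_sub_le_eVariationOn {v : ℝ → ℝ} {I : Set ℝ} (hv : BoundedVariationOn v I)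
    {x : ℕ → ℝ} (hx : Monotone x) (hxI : ∀ r, x r ∈ I) (N : ℕ) :
    ∑ r ∈ Finset.range N, |v (x r) - v (x (r + 1))| ≤ (eVariationOn v I).toReal := by
  have := ENNReal.toReal_mono hv (eVariationOn.sum_le (f := v) (n := N) hx hxI)
  rw [ENNReal.toReal_sum fun _ _ => edist_ne_top _ _] at this
  simpa only [edist_comm, edist_dist, Real.dist_eq, ENNReal.toReal_ofReal (abs_nonneg _)] using this

lemma rowCost_floor_le {v : ℝ → ℝ} {I : Set ℝ} (h01 : MapsTo v I (Icc 0 1))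
    (hv : BoundedVariationOn v I) {S : Set ℝ} (hS : ∀ y ∈ I, v y ∈ Ioo 0 1 → y ∈ S)
    {x : ℕ → ℝ} (hx : Monotone x) (hxI : ∀ r, x r ∈ I) (n N : ℕ) :
    (rowCost n N (fun r => ⌊n * v (x r)⌋₊) : ℝ) ≤
      2 * ((Finset.range N).filter fun r => x r ∈ S).card + n * (eVariationOn v I).toReal +
        2 * ((Finset.range N).filter fun r => x r ≠ x (r + 1)).card := by
  set m : ℕ → ℕ := fun r => ⌊n * v (x r)⌋₊
  have nonneg (r : ℕ) : 0 ≤ n * v (x r) := mul_nonneg n.cast_nonneg (h01 (hxI r)).1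
  have mixed (r : ℕ) (h : 0 < m r ∧ m r < n) : x r ∈ S := by
    have hn : (0 : ℝ) < n := Nat.cast_pos.2 (h.1.trans h.2)
    exact hS _ (hxI r) ⟨pos_of_mul_pos_right (Nat.pos_of_floor_pos h.1) hn.le,
      (mul_lt_iff_lt_one_right hn).1 ((Nat.floor_lt (nonneg r)).1 h.2)⟩
  have row (r : ℕ) : ((2 * (if 0 < m r ∧ m r < n then 1 else 0) +
      (if m r = m (r + 1) then 0 else 1) + ((m r : ℤ) - m (r + 1)).natAbs : ℕ) : ℝ) ≤
        2 * (if x r ∈ S then 1 else 0) +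
          n * |v (x r) - v (x (r + 1))| + 2 * (if x r ≠ x (r + 1) then 1 else 0) := by
    have jump : (((if m r = m (r + 1) then 0 else 1) + ((m r : ℤ) - m (r + 1)).natAbs : ℕ) : ℝ) ≤
        n * |v (x r) - v (x (r + 1))| + 2 * (if x r ≠ x (r + 1) then 1 else 0) := by
      by_cases hx : x r = x (r + 1)
      · simp [m, hx]
      · have := natAbs_floor_sub_floor_le (nonneg r) (nonneg (r + 1))
        rw [← mul_sub, abs_mul, Nat.abs_cast] at this
        have : (((if m r = m (r + 1) then 0 else 1 : ℕ)) : ℝ) ≤ 1 := by split_ifs <;> simp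
        rw [if_pos hx, Nat.cast_add]
        linarith
    have mix : (if 0 < m r ∧ m r < n then 1 else 0 : ℕ) ≤
        (if x r ∈ S then 1 else 0 : ℝ) := by
      by_cases h : 0 < m r ∧ m r < n
      · rw [if_pos h, if_pos (mixed r h), Nat.cast_one]
      · rw [if_neg h, Nat.cast_zero]
        positivity
    rw [add_assoc (2 * _), Nat.cast_add, Nat.cast_mul, Nat.cast_two, add_assoc]
    exact add_le_add (mul_le_mul_of_nonneg_left mix zero_le_two) jump
  rw [rowCost, Nat.cast_sum]
  refine (Finset.sum_le_sum fun r _ => row r).trans ?_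
  simp only [Finset.sum_add_distrib, ← Finset.mul_sum, Finset.sum_boole]
  gcongr
  exact sum_abs_sub_le_eVariationOn hv hx hxI N

lemma card_filter_ne_succ_le {β : ℕ → ℕ} (hβ : Monotone β) (N : ℕ) :
    ((Finset.range N).filter fun r => β r ≠ β (r + 1)).card ≤ β N := by
  induction N with
  | zero => simp
  | succ N ih =>
    have := hβ (Nat.le_add_right N 1)
    rw [Finset.range_add_one, Finset.filter_insert]
    split_ifs with h
    · rw [Finset.card_insert_of_notMem (by simp)]
      omega
    · omega

/-- Index of the cell containing the point `r / n`, when `[0, L]` is divided into `B` cells of equal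
length. The minimum keeps the index below `B` at the right end. -/
def cellOfRow (L : ℝ) (n B r : ℕ) : ℕ := min ⌊r / (n * (L / B))⌋₊ (B - 1)

lemma monotone_cellOfRow {L : ℝ} (hL : 0 ≤ L) (n B : ℕ) : Monotone (cellOfRow L n B) :=
  fun r s hrs => min_le_min_right _ (Nat.floor_mono (by gcongr))

lemma mem_Icc_cellOfRow {L : ℝ} (hL : 0 < L) {n B r : ℕ} (hn : 0 < n) (hB : 0 < B)
    (hr : (r : ℝ) / n ≤ L) :
    (r : ℝ) / n ∈ Icc (L / B * cellOfRow L n B r) (L / B * (cellOfRow L n B r + 1)) := by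
  set w := L / B
  have hw : 0 < w := by positivity
  rw [mem_Icc, ← le_div_iff₀' hw, ← div_le_iff₀' hw, div_div]
  have hfloor := Nat.floor_le (a := (r : ℝ) / (n * w)) (by positivity)
  refine ⟨hfloor.trans' (Nat.cast_le.2 (min_le_left _ _)), ?_⟩
  rw [← Nat.cast_add_one, cellOfRow, ← min_add_add_right, Nat.sub_add_cancel hB, Nat.cast_min,
    le_min_iff]
  refine ⟨?_, ?_⟩
  · exact_mod_cast (Nat.lt_floor_add_one _).le
  · rw [← div_div, div_le_iff₀ hw]
    exact hr.trans_eq (by simp only [w]; field_simp)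

lemma card_filter_cellOfRow_le {L : ℝ} (hL : 0 < L) {n B N : ℕ} (hn : 0 < n) (hB : 0 < B)
    (hN : ∀ r < N, (r : ℝ) / n ≤ L) (b : ℕ) :
    ((Finset.range N).filter fun r => cellOfRow L n B r = b).card ≤ ⌊n * (L / B) + 1⌋₊ := by
  set a : ℝ := n * (L / B)
  have ha : 0 ≤ a := by positivity
  have hn' : (0 : ℝ) < n := Nat.cast_pos.2 hn
  have subset : (Finset.range N).filter (fun r => cellOfRow L n B r = b) ⊆
      Finset.Icc ⌈a * b⌉₊ ⌊a * (b + 1)⌋₊ := by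
    intro r hr
    obtain ⟨hrN, rfl⟩ := Finset.mem_filter.1 hr
    obtain ⟨lower, upper⟩ := mem_Icc_cellOfRow hL hn hB (hN r (Finset.mem_range.1 hrN))
    rw [le_div_iff₀' hn', ← mul_assoc] at lower
    rw [div_le_iff₀' hn', ← mul_assoc] at upper
    exact Finset.mem_Icc.2 ⟨Nat.ceil_le.2 lower, Nat.le_floor upper⟩
  refine (Finset.card_le_card subset).trans ?_
  rw [Nat.card_Icc, Nat.floor_add_one ha]
  have : ⌊a * (b + 1)⌋₊ ≤ ⌈a * b⌉₊ + ⌊a⌋₊ := by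
    rw [mul_add_one, add_comm ⌈a * b⌉₊, ← Nat.floor_add_natCast ha, add_comm _ a]
    gcongr
    exact Nat.le_ceil _
  omega

lemma card_filter_sample_mem_le {L : ℝ} (hL : 0 < L) {n B N : ℕ} (hn : 0 < n) (hB : 0 < B)
    (hN : ∀ r < N, (r : ℝ) / n ≤ L) {S : Set ℝ} (hS : volume S ≠ ∞) {t : ℝ}
    (ht : (((Finset.range B).filter fun b : ℕ => L / B * b + t ∈ S).card : ℝ≥0∞) *
      ENNReal.ofReal (L / B) ≤ volume S) :
    (((Finset.range N).filter fun r => L / B * cellOfRow L n B r + t ∈ S).card : ℝ) ≤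
      n * (volume S).toReal + B := by
  set w := L / B
  set G := (Finset.range B).filter fun b : ℕ => w * b + t ∈ S
  have hw : 0 < w := by positivity
  have hG : G.card * w ≤ (volume S).toReal := by
    simpa [ENNReal.toReal_mul, hw.le] using ENNReal.toReal_mono hS ht
  have hGB : (G.card : ℝ) ≤ B :=
    Nat.cast_le.2 ((Finset.card_filter_le _ _).trans_eq (Finset.card_range B))
  have maps : ∀ r ∈ (Finset.range N).filter fun r => w * cellOfRow L n B r + t ∈ S,
      cellOfRow L n B r ∈ G := fun r hr => by
    refine Finset.mem_filter.2 ⟨Finset.mem_range.2 ?_, (Finset.mem_filter.1 hr).2⟩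
    exact (min_le_right _ _).trans_lt (Nat.sub_lt hB one_pos)
  have count := Finset.card_le_mul_card_image_of_maps_to maps ⌊n * w + 1⌋₊ fun b _ =>
    (Finset.card_le_card (Finset.filter_subset_filter _ (Finset.filter_subset _ _))).trans
      (card_filter_cellOfRow_le hL hn hB hN b)
  calc _ ≤ ((⌊n * w + 1⌋₊ * G.card : ℕ) : ℝ) := Nat.cast_le.2 count
    _ ≤ (n * w + 1) * G.card := by
        rw [Nat.cast_mul]
        gcongr
        exact Nat.floor_le (by positivity)
    _ = n * (G.card * w) + G.card := by ring
    _ ≤ n * (volume S).toReal + B := by gcongr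

lemma exists_sampled_rows {L : ℝ} (hL : 0 < L) {v : ℝ → ℝ} (h01 : MapsTo v (Ioo 0 L) (Icc 0 1))
    (hv : BoundedVariationOn v (Ioo 0 L)) {n B N : ℕ} (hn : 0 < n) (hB : 0 < B)
    (hN : ∀ r < N, (r : ℝ) / n ≤ L) :
    ∃ m : ℕ → ℕ, (∀ r, m r ≤ n) ∧
      (rowCost n N m : ℝ) ≤ n * (limitEnergy L v).toReal + 4 * B ∧
      ∀ r < N, ∃ y ∈ Ioo 0 L, |y - r / n| ≤ L / B ∧ |(m r : ℝ) / n - v y| ≤ 1 / n := by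
  set w := L / B
  set S := {x ∈ Ioo 0 L | 0 < v x ∧ v x < 1}
  have hw : 0 < w := by positivity
  have hn' : (0 : ℝ) < n := Nat.cast_pos.2 hn
  obtain ⟨t, ⟨ht0, htw⟩, ht⟩ := exists_offset_card_mul_le S hw B
  set x : ℕ → ℝ := fun r => w * cellOfRow L n B r + t
  have hS : volume S ≠ ∞ := measure_ne_top_of_subset (sep_subset _ _) (by simp)
  have hcell (r : ℕ) : cellOfRow L n B r + 1 ≤ B :=
    (Nat.add_le_add_right (min_le_right _ _) 1).trans_eq (Nat.sub_add_cancel hB)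
  have hx (r : ℕ) : x r ∈ Ioo 0 L := by
    refine ⟨by positivity, ?_⟩
    calc x r < w * (cellOfRow L n B r + 1) := by simp only [x]; linarith
      _ ≤ w * B := by gcongr; exact_mod_cast hcell r
      _ = L := by simp only [w]; field_simp
  have mono : Monotone x := fun r s hrs => by
    have := monotone_cellOfRow hL.le n B hrs
    simp only [x]
    gcongr
  have transitions : (((Finset.range N).filter fun r => x r ≠ x (r + 1)).card : ℝ) ≤ B := by
    refine Nat.cast_le.2 <| (Finset.card_le_card ?_).trans <|
      (card_filter_ne_succ_le (monotone_cellOfRow hL.le n B) N).trans <|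
      Nat.le_of_succ_le (hcell N)
    exact Finset.monotone_filter_right _ fun r _ hne h => hne (by simp only [x, h])
  refine ⟨fun r => ⌊n * v (x r)⌋₊, fun r => Nat.floor_le_of_le ?_, ?_, fun r hr => ?_⟩
  · exact mul_le_of_le_one_right n.cast_nonneg (h01 (hx r)).2
  · rw [limitEnergy, ENNReal.toReal_add (ENNReal.mul_ne_top (by simp) hS) hv, ENNReal.toReal_mul,
      ENNReal.toReal_ofNat]
    have cost := rowCost_floor_le h01 hv (S := S) (fun y hy h => ⟨hy, h⟩) mono hx n N
    have mixed := card_filter_sample_mem_le hL hn hB hN hS ht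
    linarith
  · obtain ⟨lower, upper⟩ := mem_Icc_cellOfRow hL hn hB (hN r hr)
    refine ⟨x r, hx r, abs_le.2 ⟨?_, ?_⟩, ?_⟩
    · simp only [x]; linarith
    · simp only [x]; linarith
    · have h0 : 0 ≤ n * v (x r) := mul_nonneg hn'.le (h01 (hx r)).1
      rw [div_sub' hn'.ne', abs_div, Nat.abs_cast]
      gcongr
      exact abs_le.2 ⟨by linarith [Nat.lt_floor_add_one (n * v (x r))],
        by linarith [Nat.floor_le h0]⟩

lemma tendsto_rowDensity_of_sample {L : ℝ} {v : ℝ → ℝ} {m : ℕ → ℕ → ℕ} {δ : ℕ → ℝ}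
    (hδ : Tendsto δ atTop (nhds 0))
    (h : ∀ᶠ n : ℕ in atTop, ∀ r : ℕ, (r : ℝ) / n ≤ L → ∃ y : ℝ, |y - r / n| ≤ δ n ∧
      |(m n r : ℝ) / n - v y| ≤ 1 / n) {x : ℝ} (hx : x ∈ Ioc 0 L) (hv : ContinuousAt v x) :
    Tendsto (fun n => rowDensity n (m n) x) atTop (nhds (v x)) := by
  have one_div := tendsto_one_div_atTop_nhds_zero_nat (𝕜 := ℝ)
  have sample : ∀ᶠ n : ℕ in atTop, ∃ y, |y - x| ≤ δ n + 1 / n ∧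
      |rowDensity n (m n) x - v y| ≤ 1 / n := by
    filter_upwards [h, eventually_gt_atTop 0] with n h hn
    have hn' : (0 : ℝ) < n := Nat.cast_pos.2 hn
    have hnx : 0 < (n : ℝ) * x := mul_pos hn' hx.1
    obtain ⟨r, hr⟩ := Nat.exists_eq_succ_of_ne_zero (Nat.ceil_pos.2 hnx).ne'
    obtain ⟨lower, upper⟩ := (Nat.ceil_eq_iff r.succ_ne_zero).1 hr
    rw [Nat.succ_sub_one, ← div_lt_iff₀' hn'] at lower
    rw [Nat.cast_succ, ← le_div_iff₀' hn', add_div] at upper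
    obtain ⟨y, hy, hmy⟩ := h r (lower.le.trans hx.2)
    refine ⟨y, (abs_sub_le y (r / n) x).trans (add_le_add hy ?_), ?_⟩
    · exact abs_le.2 ⟨by linarith, by linarith [one_div_pos.2 hn']⟩
    · rwa [rowDensity, hr, Nat.succ_sub_one]
  obtain ⟨y, hy⟩ := sample.choice
  have close : Tendsto (fun n => |rowDensity n (m n) x - v (y n)|) atTop (nhds 0) :=
    squeeze_zero' (.of_forall fun n => abs_nonneg _) (hy.mono fun n h => h.2) one_div
  have hyx : Tendsto y atTop (nhds x) := tendsto_iff_dist_tendsto_zero.2 <|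
    squeeze_zero' (.of_forall fun n => dist_nonneg) (hy.mono fun n h => h.1)
      (by simpa using hδ.add one_div)
  simpa using ((tendsto_zero_iff_abs_tendsto_zero _).2 close).add (hv.tendsto.comp hyx)

lemma ae_tendsto_rowDensity_of_sample {L : ℝ} {v : ℝ → ℝ} (hv : BoundedVariationOn v (Ioo 0 L))
    {m : ℕ → ℕ → ℕ} {δ : ℕ → ℝ} (hδ : Tendsto δ atTop (nhds 0))
    (h : ∀ᶠ n : ℕ in atTop, ∀ r : ℕ, (r : ℝ) / n ≤ L → ∃ y : ℝ, |y - r / n| ≤ δ n ∧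
      |(m n r : ℝ) / n - v y| ≤ 1 / n) :
    ∀ᵐ x ∂volume.restrict (Ioo 0 L),
      Tendsto (fun n => rowDensity n (m n) x) atTop (nhds (v x)) := by
  filter_upwards [hv.locallyBoundedVariationOn.ae_differentiableWithinAt measurableSet_Ioo,
    ae_restrict_mem measurableSet_Ioo] with x hdiff hx
  exact tendsto_rowDensity_of_sample hδ h ⟨hx.1, hx.2.le⟩
    (hdiff.differentiableAt (isOpen_Ioo.mem_nhds hx)).continuousAt

lemma tendsto_natSqrt_atTop : Tendsto Nat.sqrt atTop atTop :=
  tendsto_atTop_atTop_of_monotone (fun _ _ => Nat.sqrt_le_sqrt) fun b => ⟨b * b, (Nat.sqrt_eq b).ge⟩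

lemma tendsto_natSqrt_add_one_div {a : ℕ → ℕ}
    (ha : Tendsto (fun n : ℕ => (a n : ℝ) / (n : ℝ) ^ 2) atTop (nhds 0)) :
    Tendsto (fun n : ℕ => ((Nat.sqrt (a n) + 1 : ℕ) : ℝ) / n) atTop (nhds 0) := by
  have bound : Tendsto (fun n : ℕ => √((a n : ℝ) / (n : ℝ) ^ 2) + 1 / n) atTop (nhds 0) := by
    simpa using ha.sqrt.add tendsto_one_div_atTop_nhds_zero_nat
  refine squeeze_zero (fun n => by positivity) (fun n => ?_) bound
  rw [Nat.cast_add_one, add_div, Real.sqrt_div' _ (by positivity), Real.sqrt_sq n.cast_nonneg]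
  gcongr
  exact Real.nat_sqrt_le_real_sqrt

lemma exists_recovery_rows {L : ℝ} (hL : 0 < L) {v : ℝ → ℝ} (h01 : MapsTo v (Ioo 0 L) (Icc 0 1))
    (hv : BoundedVariationOn v (Ioo 0 L)) :
    ∃ m : ℕ → ℕ → ℕ, ∃ e : ℕ → ℝ, (∀ᶠ n in atTop, ∀ r, m n r ≤ n) ∧
      (∀ᵐ x ∂volume.restrict (Ioo 0 L),
        Tendsto (fun n => rowDensity n (m n) x) atTop (nhds (v x))) ∧
      Tendsto e atTop (nhds 0) ∧
      ∀ᶠ n : ℕ in atTop, 1 / (n : ℝ) * rowCost n (⌊L * (n : ℝ) ^ 2⌋₊ / n + 1) (m n) ≤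
        (limitEnergy L v).toReal + e n := by
  set B : ℕ → ℕ := fun n => Nat.sqrt n + 1
  have rows : ∀ᶠ n : ℕ in atTop, ∃ m : ℕ → ℕ, (∀ r, m r ≤ n) ∧
      (rowCost n (⌊L * n⌋₊ + 1) m : ℝ) ≤ n * (limitEnergy L v).toReal + 4 * B n ∧
      ∀ r < ⌊L * n⌋₊ + 1,
        ∃ y ∈ Ioo 0 L, |y - r / n| ≤ L / B n ∧ |(m r : ℝ) / n - v y| ≤ 1 / n := by
    filter_upwards [eventually_gt_atTop 0] with n hn
    refine exists_sampled_rows hL h01 hv hn (Nat.sqrt n).succ_pos fun r hr => ?_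
    exact (div_le_iff₀ (by positivity)).2
      ((Nat.le_floor_iff (by positivity)).1 (Nat.le_of_lt_succ hr))
  obtain ⟨m, hm⟩ := rows.choice
  refine ⟨m, fun n => 4 * (B n / n), hm.mono fun n h => h.1, ?_, ?_, ?_⟩
  · have hB : Tendsto (fun n => L / B n) atTop (nhds 0) := by
      refine tendsto_const_nhds.div_atTop (tendsto_natCast_atTop_atTop.comp ?_)
      exact (tendsto_add_atTop_nat 1).comp tendsto_natSqrt_atTop
    refine ae_tendsto_rowDensity_of_sample hv hB ?_
    filter_upwards [hm, eventually_gt_atTop 0] with n hm hn r hr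
    obtain ⟨y, -, h⟩ := hm.2.2 r (Nat.lt_succ_of_le (Nat.le_floor
      ((div_le_iff₀ (Nat.cast_pos.2 hn)).1 hr)))
    exact ⟨y, h⟩
  · have : Tendsto (fun n : ℕ => (n : ℝ) / (n : ℝ) ^ 2) atTop (nhds 0) := by
      simpa [sq] using tendsto_inv_atTop_nhds_zero_nat (𝕜 := ℝ)
    simpa only [mul_zero] using (tendsto_natSqrt_add_one_div this).const_mul 4
  · filter_upwards [hm, eventually_gt_atTop 0] with n hm hn
    have hn' : (0 : ℝ) < n := Nat.cast_pos.2 hn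
    rw [floor_mul_sq_div, one_div_mul_eq_div, div_le_iff₀ hn']
    calc _ ≤ n * (limitEnergy L v).toReal + 4 * B n := hm.2.1
      _ = _ := by field_simp

/-! ### Correcting the number of ones -/

/-- The profile obtained by handing out `j` units one at a time, cyclically, to the `K` rows
starting at row `s`. -/
def terrace (K s j r : ℕ) : ℕ :=
  if s ≤ r ∧ r < s + K then j / K + (if r < s + j % K then 1 else 0) else 0

/-- `m'` arises from the row counts `m` by a small correction of the first `R` rows: each count
moves by at most `K`, and the row cost grows by at most `6 K`. -/
structure IsCorrection (n R K : ℕ) (m m' : ℕ → ℕ) : Prop where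
  le : ∀ r, m' r ≤ n
  natAbs_sub_le : ∀ r, ((m' r : ℤ) - m r).natAbs ≤ K
  eq_of_le : ∀ r, R ≤ r → m' r = m r
  rowCost_le : ∀ N, rowCost n N m' ≤ rowCost n N m + 6 * K

lemma rowCost_min_add_le (n N : ℕ) (m δ : ℕ → ℕ) :
    rowCost n N (fun r => min n (m r + δ r)) ≤
      rowCost n N m + 2 * ((Finset.range N).filter fun r => δ r ≠ 0).card +
        2 * ∑ r ∈ Finset.range N, ((δ r : ℤ) - δ (r + 1)).natAbs := by
  simp only [rowCost, Finset.card_filter, Finset.mul_sum, ← Finset.sum_add_distrib]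
  refine Finset.sum_le_sum fun r _ => ?_
  have mixed : (if 0 < min n (m r + δ r) ∧ min n (m r + δ r) < n then 1 else 0) ≤
      (if 0 < m r ∧ m r < n then 1 else 0) + if δ r ≠ 0 then 1 else 0 := by
    split_ifs <;> omega
  have jump : (if min n (m r + δ r) = min n (m (r + 1) + δ (r + 1)) then 0 else 1) ≤
      (if m r = m (r + 1) then 0 else 1) + ((δ r : ℤ) - δ (r + 1)).natAbs := by
    split_ifs <;> omega
  have vertical : (((min n (m r + δ r) : ℕ) : ℤ) - (min n (m (r + 1) + δ (r + 1)) : ℕ)).natAbs ≤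
      ((m r : ℤ) - m (r + 1)).natAbs + ((δ r : ℤ) - δ (r + 1)).natAbs := by
    omega
  linarith

lemma sum_natAbs_sub_succ_le {δ : ℕ → ℕ} {s : ℕ} (hs : ∀ r < s, δ r = 0)
    (hδ : AntitoneOn δ (Ici s)) (N : ℕ) :
    ∑ r ∈ Finset.range N, ((δ r : ℤ) - δ (r + 1)).natAbs ≤ 2 * δ s := by
  suffices h : ∑ r ∈ Finset.range N, ((δ r : ℤ) - δ (r + 1)).natAbs + δ N ≤
      if N < s then 0 else 2 * δ s by
    split_ifs at h <;> omega
  induction N with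
  | zero =>
    split_ifs with h
    · simp [hs 0 h]
    · obtain rfl : s = 0 := by omega
      simp [two_mul]
  | succ N ih =>
    rw [Finset.sum_range_succ]
    obtain h | rfl | h := lt_trichotomy s (N + 1)
    · have := hδ (mem_Ici.2 (Nat.le_of_lt_succ h)) (mem_Ici.2 h.le) N.le_succ
      rw [if_neg (by omega)] at ih ⊢
      omega
    · rw [if_pos N.lt_succ_self, hs N N.lt_succ_self] at ih
      rw [if_neg (lt_irrefl _), hs N N.lt_succ_self]
      omega
    · rw [if_pos (by omega), hs N (by omega)] at ih
      rw [if_pos h, hs N (by omega), hs (N + 1) h]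
      omega

lemma terrace_succ {K : ℕ} (hK : 0 < K) (s j r : ℕ) :
    terrace K s (j + 1) r = terrace K s j r + if r = s + j % K then 1 else 0 := by
  have hlt := Nat.mod_lt j hK
  have hdiv := Nat.div_add_mod j K
  obtain h | h : j % K + 1 < K ∨ j % K + 1 = K := by omega
  · obtain ⟨hq, hp⟩ := (Nat.div_mod_unique hK (a := j + 1) (d := j / K)).2 ⟨by omega, h⟩
    rw [terrace, terrace, hq, hp]
    split_ifs <;> omega
  · obtain ⟨hq, hp⟩ := (Nat.div_mod_unique hK (a := j + 1) (d := j / K + 1)).2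
      ⟨by rw [mul_add_one]; omega, hK⟩
    rw [terrace, terrace, hq, hp]
    split_ifs <;> omega

lemma terrace_zero (K s r : ℕ) : terrace K s 0 r = 0 := by
  unfold terrace
  simp
  omega

lemma terrace_mul_self {K : ℕ} (hK : 0 < K) (s r : ℕ) :
    terrace K s (K * K) r = if s ≤ r ∧ r < s + K then K else 0 := by
  rw [terrace, Nat.mul_div_cancel _ hK, Nat.mul_mod_right]
  split_ifs <;> omega

lemma monotone_terrace {K : ℕ} (hK : 0 < K) (s r : ℕ) : Monotone fun j => terrace K s j r :=
  monotone_nat_of_le_succ fun j => (terrace_succ hK s j r).ge.trans' (Nat.le_add_right _ _)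

lemma terrace_eq_zero {K s j r : ℕ} (h : ¬(s ≤ r ∧ r < s + K)) : terrace K s j r = 0 :=
  if_neg h

lemma antitoneOn_terrace (K s j : ℕ) : AntitoneOn (terrace K s j) (Ici s) := by
  intro a ha b hb hab
  rw [mem_Ici] at ha hb
  unfold terrace
  generalize j / K = q
  generalize j % K = p
  split_ifs <;> omega

lemma exists_le_eq_of_le_succ {f : ℕ → ℕ} (hf : ∀ j, f (j + 1) ≤ f j + 1) {J T : ℕ}
    (h0 : f 0 ≤ T) (hJ : T ≤ f J) : ∃ j ≤ J, f j = T := by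
  induction J with
  | zero => exact ⟨0, le_rfl, le_antisymm h0 hJ⟩
  | succ J ih =>
    obtain h | h := le_or_gt T (f J)
    · obtain ⟨j, hj, rfl⟩ := ih h
      exact ⟨j, hj.trans J.le_succ, rfl⟩
    · exact ⟨J + 1, le_rfl, le_antisymm ((hf J).trans h) hJ⟩

lemma exists_window {n R K C d : ℕ} {a : ℕ → ℕ} (ha : ∀ r, a r ≤ n) (hK : 0 < K) (hKn : K ≤ n)
    (hd : C * d ≤ K * K) (hR : n * (R + C * K) < C * ∑ r ∈ Finset.range R, a r) :
    ∃ s, s + K ≤ R ∧ d ≤ ∑ i ∈ Finset.range K, min K (a (s + i)) := by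
  by_contra! small
  set T := R / K
  have hTK : T * K ≤ R := Nat.div_mul_le_self R K
  have window (t : ℕ) (ht : t < T) : K * ∑ i ∈ Finset.range K, a (t * K + i) ≤ n * d := by
    have htR : t * K + K ≤ R := by
      rw [← add_one_mul]
      exact (Nat.mul_le_mul_right K ht).trans hTK
    refine le_trans ?_ (Nat.mul_le_mul_left n (small _ htR).le)
    rw [Finset.mul_sum, Finset.mul_sum]
    refine Finset.sum_le_sum fun i _ => ?_
    obtain h | h := le_total K (a (t * K + i))
    · rw [min_eq_left h, mul_comm n]
      exact Nat.mul_le_mul_left K (ha _)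
    · rw [min_eq_right h]
      exact Nat.mul_le_mul_right _ hKn
  have full : K * ∑ r ∈ Finset.range (T * K), a r ≤ T * (n * d) := by
    rw [sum_range_mul_eq_sum_rows, Finset.mul_sum]
    exact (Finset.sum_le_card_nsmul _ _ _ fun t ht => window t (Finset.mem_range.1 ht)).trans_eq
      (by simp)
  have rest : ∑ r ∈ Finset.range R, a r ≤ ∑ r ∈ Finset.range (T * K), a r + K * n := by
    rw [← Nat.div_add_mod' R K, Finset.sum_range_add]
    gcongr
    refine (Finset.sum_le_card_nsmul _ _ n fun i _ => ha _).trans ?_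
    rw [Finset.card_range, smul_eq_mul]
    exact Nat.mul_le_mul_right n (Nat.mod_lt R hK).le
  have : C * ∑ r ∈ Finset.range R, a r ≤ n * (R + C * K) := by
    refine Nat.le_of_mul_le_mul_left ?_ hK
    calc K * (C * ∑ r ∈ Finset.range R, a r)
        ≤ K * (C * (∑ r ∈ Finset.range (T * K), a r + K * n)) := by gcongr
      _ = C * (K * ∑ r ∈ Finset.range (T * K), a r) + K * (n * (C * K)) := by ring
      _ ≤ C * (T * (n * d)) + K * (n * (C * K)) := by gcongr
      _ = n * T * (C * d) + K * (n * (C * K)) := by ring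
      _ ≤ n * T * (K * K) + K * (n * (C * K)) := by gcongr
      _ = K * (n * (T * K + C * K)) := by ring
      _ ≤ K * (n * (R + C * K)) := by gcongr
  exact this.not_gt hR

lemma exists_terrace_sum_eq {n R K s d : ℕ} {m : ℕ → ℕ} (hm : ∀ r, m r ≤ n) (hK : 0 < K)
    (hs : s + K ≤ R) (hd : d ≤ ∑ i ∈ Finset.range K, min K (n - m (s + i))) :
    ∃ j ≤ K * K, ∑ r ∈ Finset.range R, min n (m r + terrace K s j r) =
      ∑ r ∈ Finset.range R, m r + d := by
  refine exists_le_eq_of_le_succ (fun j => ?_) ?_ ?_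
  · calc ∑ r ∈ Finset.range R, min n (m r + terrace K s (j + 1) r)
        ≤ ∑ r ∈ Finset.range R, (min n (m r + terrace K s j r) +
            if r = s + j % K then 1 else 0) :=
          Finset.sum_le_sum fun r _ => by rw [terrace_succ hK]; omega
      _ ≤ ∑ r ∈ Finset.range R, min n (m r + terrace K s j r) + 1 := by
          rw [Finset.sum_add_distrib, Finset.sum_ite_eq']
          split_ifs <;> simp
  · simp only [terrace_zero, add_zero, min_eq_right (hm _), le_add_iff_nonneg_right, zero_le]
  · have gain (r : ℕ) : min n (m r + terrace K s (K * K) r) =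
        m r + if r ∈ Finset.Ico s (s + K) then min K (n - m r) else 0 := by
      have := hm r
      simp only [terrace_mul_self hK, Finset.mem_Ico]
      split_ifs <;> omega
    have inside : Finset.range R ∩ Finset.Ico s (s + K) = Finset.Ico s (s + K) :=
      Finset.inter_eq_right.2 fun r hr => by grind
    simp only [gain]
    rw [Finset.sum_add_distrib, Finset.sum_ite_mem, inside, Finset.sum_Ico_eq_sum_range,
      Nat.add_sub_cancel_left]
    gcongr

lemma isCorrection_terrace {n R K s j : ℕ} {m : ℕ → ℕ} (hm : ∀ r, m r ≤ n) (hK : 0 < K)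
    (hs : s + K ≤ R) (hj : j ≤ K * K) :
    IsCorrection n R K m fun r => min n (m r + terrace K s j r) := by
  have le_K (r : ℕ) : terrace K s j r ≤ K := by
    calc terrace K s j r ≤ terrace K s (K * K) r := monotone_terrace hK s r hj
      _ = if s ≤ r ∧ r < s + K then K else 0 := terrace_mul_self hK s r
      _ ≤ K := by split_ifs <;> omega
  refine ⟨fun r => min_le_left _ _, fun r => ?_, fun r hr => ?_, fun N => ?_⟩
  · have := hm r
    have := le_K r
    omega
  · rw [terrace_eq_zero (by omega), add_zero, min_eq_right (hm r)]
  · have support : ((Finset.range N).filter fun r => terrace K s j r ≠ 0).card ≤ K := by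
      refine (Finset.card_le_card (t := Finset.Ico s (s + K)) fun r hr => ?_).trans_eq (by simp)
      rw [Finset.mem_Ico]
      by_contra hout
      exact (Finset.mem_filter.1 hr).2 (terrace_eq_zero hout)
    have steps := sum_natAbs_sub_succ_le (s := s) (fun r hr => terrace_eq_zero (by omega))
      (antitoneOn_terrace K s j) N
    have := le_K s
    have := rowCost_min_add_le n N m (terrace K s j)
    omega

lemma exists_isCorrection_sum_add {n R K C d : ℕ} {m : ℕ → ℕ} (hm : ∀ r, m r ≤ n) (hK : 0 < K)
    (hKn : K ≤ n) (hd : C * d ≤ K * K)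
    (hR : n * (R + C * K) < C * ∑ r ∈ Finset.range R, (n - m r)) :
    ∃ m', IsCorrection n R K m m' ∧
      ∑ r ∈ Finset.range R, m' r = ∑ r ∈ Finset.range R, m r + d := by
  obtain ⟨s, hs, room⟩ := exists_window (fun r => Nat.sub_le n (m r)) hK hKn hd hR
  obtain ⟨j, hj, hsum⟩ := exists_terrace_sum_eq hm hK hs room
  exact ⟨_, isCorrection_terrace hm hK hs hj, hsum⟩

lemma rowCost_sub {n : ℕ} {m : ℕ → ℕ} (hm : ∀ r, m r ≤ n) (N : ℕ) :
    rowCost n N (fun r => n - m r) = rowCost n N m := by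
  refine Finset.sum_congr rfl fun r _ => ?_
  have := hm r
  have := hm (r + 1)
  dsimp only
  congr 1
  · congr 1
    · exact congrArg (2 * ·) (if_congr (by omega) rfl rfl)
    · exact if_congr (by omega) rfl rfl
  · omega

lemma IsCorrection.complement {n R K : ℕ} {m m' : ℕ → ℕ} (hm : ∀ r, m r ≤ n)
    (h : IsCorrection n R K (fun r => n - m r) m') :
    IsCorrection n R K m fun r => n - m' r := by
  refine ⟨fun r => Nat.sub_le _ _, fun r => ?_, fun r hr => ?_, fun N => ?_⟩
  · have := hm r
    have := h.le r
    have := h.natAbs_sub_le r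
    omega
  · rw [h.eq_of_le r hr, Nat.sub_sub_self (hm r)]
  · rw [rowCost_sub h.le, ← rowCost_sub hm]
    exact h.rowCost_le N

lemma sum_range_sub_add_sum {n : ℕ} {m : ℕ → ℕ} (hm : ∀ r, m r ≤ n) (R : ℕ) :
    ∑ r ∈ Finset.range R, (n - m r) + ∑ r ∈ Finset.range R, m r = R * n := by
  simp only [← Finset.sum_add_distrib, Nat.sub_add_cancel (hm _), Finset.sum_const,
    Finset.card_range, smul_eq_mul]

lemma exists_isCorrection_sum_sub {n R K C d : ℕ} {m : ℕ → ℕ} (hm : ∀ r, m r ≤ n) (hK : 0 < K)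
    (hKn : K ≤ n) (hd : C * d ≤ K * K)
    (hR : n * (R + C * K) < C * ∑ r ∈ Finset.range R, m r) :
    ∃ m', IsCorrection n R K m m' ∧
      ∑ r ∈ Finset.range R, m' r + d = ∑ r ∈ Finset.range R, m r := by
  obtain ⟨m', hm', hsum⟩ := exists_isCorrection_sum_add (fun r => Nat.sub_le n (m r)) hK hKn hd
    (by simpa only [Nat.sub_sub_self (hm _)] using hR)
  refine ⟨_, hm'.complement hm, ?_⟩
  have := sum_range_sub_add_sum hm R
  have := sum_range_sub_add_sum hm'.le R
  omega

lemma exists_isCorrection_numOnes_eq {n M K C k : ℕ} {m : ℕ → ℕ} (hm : ∀ r, m r ≤ n) (hK : 0 < K)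
    (hKn : K ≤ n) (hd : C * ((k : ℤ) - numOnes n M m).natAbs ≤ K * K)
    (hones : n * (M / n + C * K) < C * ∑ r ∈ Finset.range (M / n), m r)
    (hzeros : n * (M / n + C * K) < C * ∑ r ∈ Finset.range (M / n), (n - m r)) :
    ∃ m', IsCorrection n (M / n) K m m' ∧ numOnes n M m' = k := by
  obtain h | h := le_total (numOnes n M m) k
  · obtain ⟨m', hm', hsum⟩ := exists_isCorrection_sum_add hm hK hKn hd hzeros
    refine ⟨m', hm', ?_⟩
    rw [numOnes] at h hsum
    rw [numOnes, hm'.eq_of_le _ le_rfl]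
    omega
  · obtain ⟨m', hm', hsum⟩ := exists_isCorrection_sum_sub hm hK hKn hd hones
    refine ⟨m', hm', ?_⟩
    rw [numOnes] at h hsum
    rw [numOnes, hm'.eq_of_le _ le_rfl]
    omega

/-! ### Corrections that vanish in the limit -/

lemma tendsto_sum_rows_div_sq {M : ℕ → ℕ} {m : ℕ → ℕ → ℕ} {τ : ℝ}
    (hm : ∀ᶠ n in atTop, ∀ r, m n r ≤ n)
    (hones : Tendsto (fun n => (numOnes n (M n) (m n) : ℝ) / (n : ℝ) ^ 2) atTop (nhds τ)) :
    Tendsto (fun n => ((∑ r ∈ Finset.range (M n / n), m n r : ℕ) : ℝ) / (n : ℝ) ^ 2) atTop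
      (nhds τ) := by
  have lower : Tendsto (fun n => (numOnes n (M n) (m n) : ℝ) / (n : ℝ) ^ 2 - 1 / n) atTop
      (nhds τ) := by
    simpa using hones.sub tendsto_one_div_atTop_nhds_zero_nat
  refine tendsto_of_tendsto_of_tendsto_of_le_of_le' lower hones ?_ ?_
  · filter_upwards [hm, eventually_gt_atTop 0] with n hm hn
    have partial_row : numOnes n (M n) (m n) ≤ ∑ r ∈ Finset.range (M n / n), m n r + n := by
      rw [numOnes]
      gcongr
      exact (min_le_left _ _).trans (hm _)
    have : (1 : ℝ) / n = n / (n : ℝ) ^ 2 := by field_simp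
    rw [this, ← sub_div]
    gcongr
    rw [sub_le_iff_le_add]
    exact_mod_cast partial_row
  · refine Eventually.of_forall fun n => ?_
    gcongr
    exact Nat.le_add_right _ _

lemma tendsto_sum_rows_sub_div_sq {R : ℕ → ℕ} {m : ℕ → ℕ → ℕ} {L τ : ℝ}
    (hm : ∀ᶠ n in atTop, ∀ r, m n r ≤ n)
    (hR : Tendsto (fun n => (R n : ℝ) / n) atTop (nhds L))
    (hsum : Tendsto (fun n => ((∑ r ∈ Finset.range (R n), m n r : ℕ) : ℝ) / (n : ℝ) ^ 2) atTop
      (nhds τ)) :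
    Tendsto (fun n => ((∑ r ∈ Finset.range (R n), (n - m n r) : ℕ) : ℝ) / (n : ℝ) ^ 2) atTop
      (nhds (L - τ)) := by
  refine (hR.sub hsum).congr' ?_
  filter_upwards [hm, eventually_gt_atTop 0] with n hm hn
  have total := congrArg (Nat.cast (R := ℝ)) (sum_range_sub_add_sum hm (R n))
  rw [Nat.cast_add, Nat.cast_mul, ← eq_sub_iff_add_eq] at total
  rw [total]
  field_simp

lemma eventually_rows_lt_mul_sum {R K : ℕ → ℕ} {a : ℕ → ℕ → ℕ} {C : ℕ} {L τ : ℝ}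
    (hR : Tendsto (fun n => (R n : ℝ) / n) atTop (nhds L))
    (hK : Tendsto (fun n => (K n : ℝ) / n) atTop (nhds 0))
    (ha : Tendsto (fun n => ((∑ r ∈ Finset.range (R n), a n r : ℕ) : ℝ) / (n : ℝ) ^ 2) atTop
      (nhds τ)) (hC : L < C * τ) :
    ∀ᶠ n in atTop, n * (R n + C * K n) < C * ∑ r ∈ Finset.range (R n), a n r := by
  have hRK : Tendsto (fun n => (R n : ℝ) / n + C * (K n / n)) atTop (nhds L) := by
    simpa using hR.add (hK.const_mul (C : ℝ))
  filter_upwards [hRK.eventually_lt (ha.const_mul (C : ℝ)) hC, eventually_gt_atTop 0] with n h hn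
  have hn' : (0 : ℝ) < n := Nat.cast_pos.2 hn
  have : (n : ℝ) * (R n + C * K n) < C * (∑ r ∈ Finset.range (R n), a n r : ℕ) := by
    rw [← mul_div_assoc, ← mul_div_assoc, ← add_div, div_lt_div_iff₀ hn' (by positivity)] at h
    nlinarith
  exact_mod_cast this

lemma exists_isCorrection_seq {L τ : ℝ} (hτ : τ ∈ Ioo 0 L) {k : ℕ → ℕ}
    (hk : Tendsto (fun n => (k n : ℝ) / (n : ℝ) ^ 2) atTop (nhds τ)) {M : ℕ → ℕ}
    (hM : Tendsto (fun n => ((M n / n : ℕ) : ℝ) / n) atTop (nhds L)) {m : ℕ → ℕ → ℕ}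
    (hm : ∀ᶠ n in atTop, ∀ r, m n r ≤ n)
    (hones : Tendsto (fun n => (numOnes n (M n) (m n) : ℝ) / (n : ℝ) ^ 2) atTop (nhds τ)) :
    ∃ m' : ℕ → ℕ → ℕ, ∃ K : ℕ → ℕ, Tendsto (fun n => (K n : ℝ) / n) atTop (nhds 0) ∧
      ∀ᶠ n in atTop, IsCorrection n (M n / n) (K n) (m n) (m' n) ∧
        numOnes n (M n) (m' n) = k n := by
  obtain ⟨C, hC⟩ := exists_nat_gt (max (L / τ) (L / (L - τ)))
  obtain ⟨hC₁, hC₀⟩ := max_lt_iff.1 hC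
  rw [div_lt_iff₀ hτ.1] at hC₁
  rw [div_lt_iff₀ (sub_pos.2 hτ.2)] at hC₀
  set d : ℕ → ℕ := fun n => ((k n : ℤ) - numOnes n (M n) (m n)).natAbs
  set K : ℕ → ℕ := fun n => Nat.sqrt (C * d n) + 1
  have hd : Tendsto (fun n => ((C * d n : ℕ) : ℝ) / (n : ℝ) ^ 2) atTop (nhds 0) := by
    have := (hk.sub hones).abs.const_mul (C : ℝ)
    rw [sub_self, abs_zero, mul_zero] at this
    refine this.congr fun n => ?_
    rw [← sub_div, abs_div, abs_sq, ← mul_div_assoc]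
    simp [d, Nat.cast_natAbs]
  have hK : Tendsto (fun n => (K n : ℝ) / n) atTop (nhds 0) := tendsto_natSqrt_add_one_div hd
  have hsum := tendsto_sum_rows_div_sq hm hones
  have correct : ∀ᶠ n in atTop, ∃ m', IsCorrection n (M n / n) (K n) (m n) m' ∧
      numOnes n (M n) m' = k n := by
    filter_upwards [hm, hK.eventually_le_const one_pos, eventually_gt_atTop 0,
      eventually_rows_lt_mul_sum hM hK hsum hC₁,
      eventually_rows_lt_mul_sum hM hK (tendsto_sum_rows_sub_div_sq hm hM hsum) hC₀]
      with n hm hKn hn room₁ room₀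
    rw [div_le_one (Nat.cast_pos.2 hn), Nat.cast_le] at hKn
    exact exists_isCorrection_numOnes_eq hm (Nat.succ_pos _) hKn (Nat.lt_succ_sqrt _).le room₁ room₀
  obtain ⟨m', hm'⟩ := correct.choice
  exact ⟨m', K, hK, hm'⟩

lemma abs_rowDensity_sub_le {n K : ℕ} {m m' : ℕ → ℕ}
    (h : ∀ r, ((m' r : ℤ) - m r).natAbs ≤ K) (x : ℝ) :
    |rowDensity n m' x - rowDensity n m x| ≤ K / n := by
  rw [rowDensity, rowDensity, ← sub_div, abs_div, Nat.abs_cast]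
  gcongr
  have := h (⌈(n : ℝ) * x⌉₊ - 1)
  rw [← Nat.cast_le (α := ℝ), Nat.cast_natAbs] at this
  simpa using this

lemma tendsto_rowDensity_of_natAbs_sub_le {m m' : ℕ → ℕ → ℕ} {K : ℕ → ℕ} {x y : ℝ}
    (hK : Tendsto (fun n => (K n : ℝ) / n) atTop (nhds 0))
    (h : ∀ᶠ n in atTop, ∀ r, ((m' n r : ℤ) - m n r).natAbs ≤ K n)
    (hm : Tendsto (fun n => rowDensity n (m n) x) atTop (nhds y)) :
    Tendsto (fun n => rowDensity n (m' n) x) atTop (nhds y) := by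
  have : Tendsto (fun n => rowDensity n (m' n) x - rowDensity n (m n) x) atTop (nhds 0) :=
    squeeze_zero_norm' (h.mono fun n h => abs_rowDensity_sub_le h x) hK
  simpa using this.add hm

lemma IsCorrection.energyL_le {L : ℝ} {n R K : ℕ} {m m' : ℕ → ℕ} (hn : 0 < n)
    (h : IsCorrection n R K m m') :
    energyL L n (rowSpin n ⌊L * (n : ℝ) ^ 2⌋₊ m') ≤
      1 / n * rowCost n (⌊L * (n : ℝ) ^ 2⌋₊ / n + 1) m + 6 * (K / n) := by
  calc energyL L n (rowSpin n ⌊L * (n : ℝ) ^ 2⌋₊ m')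
      ≤ 1 / n * rowCost n (⌊L * (n : ℝ) ^ 2⌋₊ / n + 1) m' := energyL_rowSpin_le L hn m'
    _ ≤ 1 / n * (rowCost n (⌊L * (n : ℝ) ^ 2⌋₊ / n + 1) m + 6 * K) := by
      gcongr
      exact_mod_cast h.rowCost_le _
    _ = 1 / n * rowCost n (⌊L * (n : ℝ) ^ 2⌋₊ / n + 1) m + 6 * (K / n) := by ring

lemma limsup_ofReal_le_of_le_add {ι : Type*} {l : Filter ι} [l.NeBot] {f e : ι → ℝ} {a : ℝ≥0∞}
    (ha : a ≠ ∞) (he : Tendsto e l (nhds 0)) (hf : ∀ᶠ n in l, f n ≤ a.toReal + e n) :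
    limsup (fun n => ENNReal.ofReal (f n)) l ≤ a := by
  have lim : Tendsto (fun n => ENNReal.ofReal (a.toReal + e n)) l (nhds a) := by
    simpa [ENNReal.ofReal_toReal ha] using ENNReal.tendsto_ofReal (he.const_add a.toReal)
  exact (limsup_le_limsup (hf.mono fun n h => ENNReal.ofReal_le_ofReal h)).trans_eq lim.limsup_eq

/-- Compatibility of the volume constraint: recovery sequence under an exact discrete
volume constraint. -/
theorem volume_constraint_recovery
    (L σ : ℝ) (hL : 0 < L) (hσ : σ ∈ Set.Ioo (0 : ℝ) 1)
    (k : ℕ → ℕ) (hk : ∀ n, k n ≤ Nat.floor (L * (n : ℝ) ^ 2))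
    (hklim : Tendsto (fun n => (k n : ℝ) / (L * (n : ℝ) ^ 2)) atTop (nhds σ))
    (v : ℝ → ℝ)
    (hrange : ∀ x ∈ Set.Ioo 0 L, 0 ≤ v x ∧ v x ≤ 1)
    (hbv : BoundedVariationOn v (Set.Ioo 0 L))
    (hint : (∫ x in Set.Ioo 0 L, v x) = σ * L) :
    ∃ u : ℕ → ℕ → ℝ, ∃ N : ℕ,
      (∀ n, N ≤ n → AdmDisc L n (k n) (u n)) ∧
      WeakStarTo (Set.Ioo 0 L) (fun n => stepFun n (u n)) v ∧
      Filter.limsup (fun n => ENNReal.ofReal (energyL L n (u n))) atTop ≤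
        2 * volume {x ∈ Set.Ioo 0 L | 0 < v x ∧ v x < 1} +
          eVariationOn v (Set.Ioo 0 L) := by
  have hσL : σ * L ∈ Ioo 0 L := ⟨mul_pos hσ.1 hL, mul_lt_of_lt_one_left hL hσ.2⟩
  have hklim' : Tendsto (fun n => (k n : ℝ) / (n : ℝ) ^ 2) atTop (nhds (σ * L)) :=
    (hklim.mul_const L).congr fun n => by field_simp
  obtain ⟨m, e, hm, hmv, he, hcost⟩ := exists_recovery_rows hL hrange hbv
  have hones := hint ▸ tendsto_numOnes_div hL.le hm hmv
  obtain ⟨m', K, hK, hm'⟩ :=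
    exists_isCorrection_seq hσL hklim' (tendsto_floor_mul_sq_div hL.le) hm hones
  have hm'v := hmv.mono fun x hx => tendsto_rowDensity_of_natAbs_sub_le hK
    (hm'.mono fun n h => h.1.natAbs_sub_le) hx
  have herror : Tendsto (fun n => e n + 6 * (K n / n)) atTop (nhds 0) := by
    simpa using he.add (hK.const_mul 6)
  obtain ⟨N, hN⟩ := eventually_atTop.1 (hm'.and (eventually_gt_atTop 0))
  refine ⟨fun n => rowSpin n ⌊L * (n : ℝ) ^ 2⌋₊ (m' n), N, fun n hn => ?_,
    weakStarTo_rowSpin hL.le (hm'.mono fun n h => h.1.le) hm'v,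
    limsup_ofReal_le_of_le_add (limitEnergy_ne_top hbv) herror ?_⟩
  · exact (hN n hn).1.2 ▸ admDisc_rowSpin (hN n hn).2 (hN n hn).1.1.le
  · filter_upwards [hm', hcost, eventually_gt_atTop 0] with n hm' hcost hn
    exact (hm'.1.energyL_le hn).trans
      ((add_le_add hcost le_rfl).trans_eq (add_assoc _ _ _))
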